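/- arXiv:1109.4009 — 2 statements merged into one kernel-verified Lean document; each statement's English description precedes it below -/
import Mathlib

section
/- Let N ≥ 2. Let a : [0,1] → ℝ be continuously differentiable, nondecreasing, nonconstant, with a(0) > 0. Let b : [0,1] → ℝ be continuous and nonpositive, such that the map r ↦ r·b(r) is differentiable on (0,1) with derivative satisfying (d/dr)(b(r)·r) > −1 − (N−1)/r² for all r ∈ (0,1). Let f : [0,∞) → ℝ be continuously differentiable and nondecreasing with f(0) = 0, f'(0) = 0, and liminf_{s→+∞} f(s)/s > 1/a(0). Then there exists a function u : [0,1] → ℝ that is continuously differentiable on [0,1], twice differentiable on (0,1), satisfies u'(0) = u'(1) = 0, u(r) > 0 for all r ∈ [0,1], u is nondecreasing, u is nonconstant, and −u''(r) + (b(r)·r − (N−1)/r)·u'(r) + u(r) = a(r)·f(u(r)) for all r ∈ (0,1). -/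
open Set Filter

/-!
With the weight `p(r) = r ^ d * exp (-∫₀ʳ b(t) t dt)`, `d = N - 1`, the equation reads
`(p u')' = p F(r, u)` with `F(r, u) = u - a(r) f(u)`, so that `u'(r) = p(r)⁻¹ ∫₀ʳ p F(·, u)`. Let
`σ` be the first positive zero of `F(0, ·)` and shoot from `u(0) = s ∈ (0, σ)`, `u'(0) = 0`. For
small `s` the right-hand side, hence `u'`, is nonnegative, whereas `u' ≥ 0` fails for `s = σ`
because `a` is not constant. The values of `s` with `u' ≥ 0` on `[0, R]` form a closed set, and
by a Hopf-type argument this set contains a neighbourhood of each `s ∈ (0, σ)` in it for which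
`u'(R) > 0`. Continuous induction therefore produces an increasing solution with `u'(R) = 0`.
-/

open scoped Topology NNReal

section RealAnalysis

theorem hasDerivWithinAt_integral_Icc {g : ℝ → ℝ} {a b r : ℝ} (hg : ContinuousOn g (Icc a b))
    (hr : r ∈ Icc a b) :
    HasDerivWithinAt (fun x => ∫ t in a..x, g t) (g r) (Icc a b) r := by
  have : Fact (r ∈ Icc a b) := ⟨hr⟩
  exact intervalIntegral.integral_hasDerivWithinAt_right
    ((hg.mono (Icc_subset_Icc_right hr.2)).intervalIntegrable_of_Icc hr.1)
    (hg.stronglyMeasurableAtFilter_nhdsWithin measurableSet_Icc r) (hg r hr)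

theorem continuousOn_integral_Icc {g : ℝ → ℝ} {a b : ℝ} (hg : ContinuousOn g (Icc a b)) :
    ContinuousOn (fun x => ∫ t in a..x, g t) (Icc a b) := fun _ hr =>
  (hasDerivWithinAt_integral_Icc hg hr).continuousWithinAt

theorem monotoneOn_of_forall_hasDerivWithinAt_nonneg {z z' : ℝ → ℝ} {s : Set ℝ} (hs : Convex ℝ s)
    (hz : ∀ t ∈ s, HasDerivWithinAt z (z' t) s t) (hz' : ∀ t ∈ s, 0 ≤ z' t) : MonotoneOn z s :=
  monotoneOn_of_hasDerivWithinAt_nonneg hs (fun t ht => (hz t ht).continuousWithinAt)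
    (fun t ht => (hz t (interior_subset ht)).mono interior_subset)
    fun t ht => hz' t (interior_subset ht)

theorem antitoneOn_mul_exp_neg {z z' : ℝ → ℝ} {s : Set ℝ} {M : ℝ} (hs : Convex ℝ s)
    (hz : ∀ t ∈ s, HasDerivWithinAt z (z' t) s t) (hle : ∀ t ∈ s, z' t ≤ M * z t) :
    AntitoneOn (fun t => z t * Real.exp (-(M * t))) s := by
  have hderiv : ∀ t ∈ s, HasDerivWithinAt (fun t => z t * Real.exp (-(M * t)))
      ((z' t - M * z t) * Real.exp (-(M * t))) s t := fun t ht => by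
    have hexp : HasDerivAt (fun t => Real.exp (-(M * t))) (Real.exp (-(M * t)) * -M) t := by
      simpa using ((hasDerivAt_id t).const_mul M).neg.exp
    exact ((hz t ht).mul hexp.hasDerivWithinAt).congr_deriv (by ring)
  exact antitoneOn_of_hasDerivWithinAt_nonpos hs (fun t ht => (hderiv t ht).continuousWithinAt)
    (fun t ht => (hderiv t (interior_subset ht)).mono interior_subset)
    fun t ht => mul_nonpos_of_nonpos_of_nonneg (sub_nonpos.2 (hle t (interior_subset ht)))
      (Real.exp_pos _).le

theorem integral_const_mul_exp_le {A c : ℝ} (hA : 0 ≤ A) (hc : 0 < c) (r : ℝ) :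
    ∫ t in (0 : ℝ)..r, A * Real.exp (c * t) ≤ A / c * Real.exp (c * r) := by
  have hint : ∫ t in (0 : ℝ)..r, A * Real.exp (c * t) = A / c * (Real.exp (c * r) - 1) := by
    rw [intervalIntegral.integral_const_mul,
      intervalIntegral.integral_comp_mul_left (fun x => Real.exp x) hc.ne', integral_exp]
    simp only [mul_zero, Real.exp_zero, smul_eq_mul]
    ring
  rw [hint]
  gcongr
  exact sub_le_self _ zero_le_one

theorem exists_first_zero {g : ℝ → ℝ} {a b : ℝ} (hab : a ≤ b) (hg : ContinuousOn g (Icc a b))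
    (ha : 0 < g a) (hb : g b < 0) :
    ∃ σ ∈ Icc a b, g σ = 0 ∧ ∀ x ∈ Ico a σ, 0 < g x := by
  have hcompact : IsCompact (Icc a b ∩ g ⁻¹' Iic 0) :=
    isCompact_Icc.of_isClosed_subset (hg.preimage_isClosed_of_isClosed isClosed_Icc isClosed_Iic)
      inter_subset_left
  obtain ⟨σ, ⟨hσ, hgσ⟩, hleast⟩ := hcompact.exists_isLeast ⟨b, right_mem_Icc.2 hab, hb.le⟩
  obtain ⟨x, hx, hgx⟩ := intermediate_value_Icc' hσ.1 (hg.mono (Icc_subset_Icc_right hσ.2))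
    ⟨hgσ, ha.le⟩
  have hxσ : x = σ := le_antisymm hx.2 (hleast ⟨⟨hx.1, hx.2.trans hσ.2⟩, hgx.le⟩)
  refine ⟨σ, hσ, hxσ ▸ hgx, fun y hy => ?_⟩
  by_contra! hneg
  exact hy.2.not_ge (hleast ⟨⟨hy.1, hy.2.le.trans hσ.2⟩, hneg⟩)

theorem left_lt_right_of_monotoneOn_Icc_of_exists_ne {g : ℝ → ℝ} {a b : ℝ}
    (hg : MonotoneOn g (Icc a b)) (hne : ∃ r ∈ Icc a b, ∃ s ∈ Icc a b, g r ≠ g s) :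
    g a < g b := by
  obtain ⟨r, hr, s, hs, hrs⟩ := hne
  have ha : a ∈ Icc a b := left_mem_Icc.2 (hr.1.trans hr.2)
  have hb : b ∈ Icc a b := right_mem_Icc.2 (hr.1.trans hr.2)
  by_contra! hba
  have hconst : ∀ t ∈ Icc a b, g t = g a := fun t ht =>
    le_antisymm ((hg ht hb ht.2).trans hba) (hg ha ht ht.1)
  exact hrs ((hconst r hr).trans (hconst s hs).symm)

theorem exists_forall_mul_le_of_derivWithin_eq_zero {f : ℝ → ℝ}
    (hf : DifferentiableWithinAt ℝ f (Ici 0) 0) (hf0 : f 0 = 0)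
    (hf'0 : derivWithin f (Ici 0) 0 = 0) (c : ℝ) : ∃ ε > 0, ∀ x ∈ Icc 0 ε, c * f x ≤ x := by
  have hlittle := hf.hasDerivWithinAt
  rw [hf'0, hasDerivWithinAt_iff_isLittleO] at hlittle
  simp only [hf0, sub_zero, smul_zero] at hlittle
  obtain ⟨ε, hε, hbound⟩ := mem_nhdsGE_iff_exists_Icc_subset.1
    ((hlittle.const_mul_left c).bound one_pos)
  refine ⟨ε, hε, fun x hx => (Real.le_norm_self _).trans ?_⟩
  have hx_bound : ‖c * f x‖ ≤ 1 * ‖x‖ := hbound hx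
  rwa [one_mul, Real.norm_of_nonneg hx.1] at hx_bound

theorem exists_lt_mul_of_lt_liminf_div {f : ℝ → ℝ} {c : ℝ} (hc : 0 < c)
    (hf : ((1 / c : ℝ) : EReal) < liminf (fun s : ℝ => ((f s / s : ℝ) : EReal)) atTop) :
    ∃ s > 0, s < c * f s := by
  obtain ⟨s, hs, hs0⟩ := ((eventually_lt_of_lt_liminf hf).and (eventually_gt_atTop 0)).exists
  rw [EReal.coe_lt_coe_iff, div_lt_div_iff₀ hc hs0, one_mul, mul_comm] at hs
  exact ⟨s, hs0, hs⟩

end RealAnalysis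

section WeightedPrimitive

/-- The function `r ↦ p(r)⁻¹ ∫₀ʳ p h`, i.e. the solution `w` of `(p w)' = p h`, `(p w)(0) = 0`.
It takes the value `0` at `r = 0`, also when `p 0 = 0`. -/
noncomputable def weightedPrimitive (p h : ℝ → ℝ) (r : ℝ) : ℝ :=
  (∫ t in (0 : ℝ)..r, p t * h t) / p r

/-- A continuous nondecreasing weight on `[0, R]`, positive away from the origin, where it may
vanish: the class to which the radial volume density `r ^ (N - 1)` belongs. -/
structure IsRadialWeight (p : ℝ → ℝ) (R : ℝ) : Prop where
  continuousOn : ContinuousOn p (Icc 0 R)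
  monotoneOn : MonotoneOn p (Icc 0 R)
  nonneg_zero : 0 ≤ p 0
  pos : ∀ r ∈ Ioc 0 R, 0 < p r

theorem weightedPrimitive_zero (p h : ℝ → ℝ) : weightedPrimitive p h 0 = 0 := by
  simp [weightedPrimitive]

theorem weightedPrimitive_neg (p h : ℝ → ℝ) (r : ℝ) :
    weightedPrimitive p (fun t => -h t) r = -weightedPrimitive p h r := by
  simp [weightedPrimitive, neg_div]

namespace IsRadialWeight

variable {p h k : ℝ → ℝ} {R r : ℝ}

theorem nonneg (hp : IsRadialWeight p R) (hr : r ∈ Icc 0 R) : 0 ≤ p r :=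
  hp.nonneg_zero.trans (hp.monotoneOn (left_mem_Icc.2 (hr.1.trans hr.2)) hr hr.1)

theorem intervalIntegrable_mul (hp : IsRadialWeight p R) (hh : ContinuousOn h (Icc 0 R))
    (hr : r ∈ Icc 0 R) :
    IntervalIntegrable (fun t => p t * h t) MeasureTheory.volume 0 r :=
  ((hp.continuousOn.mul hh).mono (Icc_subset_Icc_right hr.2)).intervalIntegrable_of_Icc hr.1

theorem mul_weightedPrimitive (hp : IsRadialWeight p R) (hr : r ∈ Icc 0 R) :
    p r * weightedPrimitive p h r = ∫ t in (0 : ℝ)..r, p t * h t := by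
  rcases hr.1.eq_or_lt with rfl | hr0
  · simp [weightedPrimitive]
  · exact mul_div_cancel₀ _ (hp.pos r ⟨hr0, hr.2⟩).ne'

theorem weightedPrimitive_sub (hp : IsRadialWeight p R) (hh : ContinuousOn h (Icc 0 R))
    (hk : ContinuousOn k (Icc 0 R)) (hr : r ∈ Icc 0 R) :
    weightedPrimitive p (fun t => h t - k t) r =
      weightedPrimitive p h r - weightedPrimitive p k r := by
  simp only [weightedPrimitive, mul_sub]
  rw [intervalIntegral.integral_sub (hp.intervalIntegrable_mul hh hr)
    (hp.intervalIntegrable_mul hk hr), sub_div]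

theorem weightedPrimitive_le_integral (hp : IsRadialWeight p R) (hh : ContinuousOn h (Icc 0 R))
    (hk : ContinuousOn k (Icc 0 R)) (hr : r ∈ Icc 0 R) (hk0 : ∀ t ∈ Icc 0 r, 0 ≤ k t)
    (hle : ∀ t ∈ Icc 0 r, h t ≤ k t) :
    weightedPrimitive p h r ≤ ∫ t in (0 : ℝ)..r, k t := by
  rcases hr.1.eq_or_lt with rfl | hr0
  · simp [weightedPrimitive]
  have hkint : IntervalIntegrable k MeasureTheory.volume 0 r :=
    (hk.mono (Icc_subset_Icc_right hr.2)).intervalIntegrable_of_Icc hr.1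
  rw [weightedPrimitive, div_le_iff₀ (hp.pos r ⟨hr0, hr.2⟩),
    ← intervalIntegral.integral_mul_const]
  refine intervalIntegral.integral_mono_on hr.1 (hp.intervalIntegrable_mul hh hr)
    (hkint.mul_const _) fun t ht => ?_
  have htR : t ∈ Icc 0 R := ⟨ht.1, ht.2.trans hr.2⟩
  calc p t * h t ≤ p t * k t := mul_le_mul_of_nonneg_left (hle t ht) (hp.nonneg htR)
    _ ≤ p r * k t := mul_le_mul_of_nonneg_right (hp.monotoneOn htR hr ht.2) (hk0 t ht)
    _ = k t * p r := mul_comm _ _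

theorem abs_weightedPrimitive_le_integral (hp : IsRadialWeight p R)
    (hh : ContinuousOn h (Icc 0 R)) (hk : ContinuousOn k (Icc 0 R)) (hr : r ∈ Icc 0 R)
    (hle : ∀ t ∈ Icc 0 r, |h t| ≤ k t) :
    |weightedPrimitive p h r| ≤ ∫ t in (0 : ℝ)..r, k t := by
  have hk0 : ∀ t ∈ Icc 0 r, 0 ≤ k t := fun t ht => (abs_nonneg _).trans (hle t ht)
  refine abs_le'.2 ⟨hp.weightedPrimitive_le_integral hh hk hr hk0 fun t ht =>
    (le_abs_self _).trans (hle t ht), ?_⟩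
  rw [← weightedPrimitive_neg]
  exact hp.weightedPrimitive_le_integral hh.neg hk hr hk0 fun t ht =>
    (neg_le_abs _).trans (hle t ht)

theorem weightedPrimitive_le_mul (hp : IsRadialWeight p R) (hh : ContinuousOn h (Icc 0 R))
    (hr : r ∈ Icc 0 R) {c : ℝ} (hc : 0 ≤ c) (hle : ∀ t ∈ Icc 0 r, h t ≤ c) :
    weightedPrimitive p h r ≤ r * c := by
  simpa using hp.weightedPrimitive_le_integral hh continuousOn_const hr (fun _ _ => hc) hle

theorem abs_weightedPrimitive_le_mul (hp : IsRadialWeight p R) (hh : ContinuousOn h (Icc 0 R))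
    (hr : r ∈ Icc 0 R) {c : ℝ} (hle : ∀ t ∈ Icc 0 r, |h t| ≤ c) :
    |weightedPrimitive p h r| ≤ r * c := by
  simpa using hp.abs_weightedPrimitive_le_integral hh continuousOn_const hr hle

theorem weightedPrimitive_nonneg (hp : IsRadialWeight p R) (hr : r ∈ Icc 0 R)
    (hh : ∀ t ∈ Icc 0 r, 0 ≤ h t) : 0 ≤ weightedPrimitive p h r :=
  div_nonneg (intervalIntegral.integral_nonneg hr.1 fun t ht =>
    mul_nonneg (hp.nonneg ⟨ht.1, ht.2.trans hr.2⟩) (hh t ht)) (hp.nonneg hr)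

theorem weightedPrimitive_pos (hp : IsRadialWeight p R) (hh : ContinuousOn h (Icc 0 R))
    (hr : r ∈ Ioc 0 R) (hnonneg : ∀ t ∈ Icc 0 r, 0 ≤ h t) (hpos : 0 < h r) :
    0 < weightedPrimitive p h r :=
  div_pos (intervalIntegral.integral_pos hr.1
    ((hp.continuousOn.mul hh).mono (Icc_subset_Icc_right hr.2))
    (fun t ht => mul_nonneg (hp.nonneg ⟨ht.1.le, ht.2.trans hr.2⟩) (hnonneg t ⟨ht.1.le, ht.2⟩))
    ⟨r, right_mem_Icc.2 hr.1.le, mul_pos (hp.pos r hr) hpos⟩) (hp.pos r hr)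

theorem continuousOn_weightedPrimitive (hp : IsRadialWeight p R)
    (hh : ContinuousOn h (Icc 0 R)) : ContinuousOn (weightedPrimitive p h) (Icc 0 R) := by
  intro r hr
  rcases hr.1.eq_or_lt with rfl | hr0
  · obtain ⟨c, hc⟩ := isCompact_Icc.exists_bound_of_continuousOn hh
    rw [ContinuousWithinAt, weightedPrimitive_zero]
    have hlim : Tendsto (fun r : ℝ => r * c) (𝓝[Icc 0 R] 0) (𝓝 0) := by
      have hcont : Continuous fun r : ℝ => r * c := by fun_prop
      simpa using (hcont.continuousWithinAt (s := Icc 0 R) (x := 0)).tendsto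
    refine squeeze_zero_norm' (eventually_mem_nhdsWithin.mono fun t ht => ?_) hlim
    exact hp.abs_weightedPrimitive_le_mul hh ht fun τ hτ => hc τ ⟨hτ.1, hτ.2.trans ht.2⟩
  · exact (continuousOn_integral_Icc (hp.continuousOn.mul hh) r hr).div (hp.continuousOn r hr)
      (hp.pos r ⟨hr0, hr.2⟩).ne'

theorem hasDerivAt_integral_mul (hp : IsRadialWeight p R) (hh : ContinuousOn h (Icc 0 R))
    (hr : r ∈ Ioo 0 R) :
    HasDerivAt (fun x => ∫ t in (0 : ℝ)..x, p t * h t) (p r * h r) r :=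
  (hasDerivWithinAt_integral_Icc (hp.continuousOn.mul hh) (Ioo_subset_Icc_self hr)).hasDerivAt
    (Icc_mem_nhds hr.1 hr.2)

theorem hasDerivAt_weightedPrimitive (hp : IsRadialWeight p R) (hh : ContinuousOn h (Icc 0 R))
    (hr : r ∈ Ioo 0 R) {p' : ℝ} (hp' : HasDerivAt p p' r) :
    HasDerivAt (weightedPrimitive p h) (h r - p' / p r * weightedPrimitive p h r) r := by
  have hne : p r ≠ 0 := (hp.pos r (Ioo_subset_Ioc_self hr)).ne'
  refine ((hp.hasDerivAt_integral_mul hh hr).div hp' hne).congr_deriv ?_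
  unfold weightedPrimitive
  field_simp

theorem tendsto_weightedPrimitive {ι : Type*} {l : Filter ι} {k : ι → ℝ → ℝ}
    (hp : IsRadialWeight p R) (hh : ContinuousOn h (Icc 0 R))
    (hk : ∀ i, ContinuousOn (k i) (Icc 0 R)) (hkh : TendstoUniformlyOn k h l (Icc 0 R))
    (hr : r ∈ Icc 0 R) :
    Tendsto (fun i => weightedPrimitive p (k i) r) l (𝓝 (weightedPrimitive p h r)) := by
  refine Metric.tendsto_nhds.2 fun ε hε => ?_
  have hR : 0 ≤ R := hr.1.trans hr.2
  filter_upwards [Metric.tendstoUniformlyOn_iff.1 hkh (ε / (R + 1)) (by positivity)] with i hi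
  rw [dist_comm, Real.dist_eq, ← hp.weightedPrimitive_sub hh (hk i) hr]
  refine (hp.abs_weightedPrimitive_le_mul (hh.sub (hk i)) hr fun t ht =>
    (hi t ⟨ht.1, ht.2.trans hr.2⟩).le).trans_lt ?_
  rw [mul_div_assoc', div_lt_iff₀ (by positivity), mul_comm]
  exact mul_lt_mul_of_pos_left (by linarith [hr.2]) hε

/-- Near `0`, where `weightedPrimitive p h` itself vanishes, positivity of `h 0` is what makes
the conclusion stable. -/
theorem eventually_weightedPrimitive_nonneg {ι : Type*} {l : Filter ι} {k : ι → ℝ → ℝ}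
    (hp : IsRadialWeight p R) (hR : 0 < R) (hh : ContinuousOn h (Icc 0 R))
    (hk : ∀ i, ContinuousOn (k i) (Icc 0 R)) (hkh : TendstoUniformlyOn k h l (Icc 0 R))
    (h0 : 0 < h 0) (hpos : ∀ r ∈ Ioc 0 R, 0 < weightedPrimitive p h r) :
    ∀ᶠ i in l, ∀ r ∈ Icc 0 R, 0 ≤ weightedPrimitive p (k i) r := by
  obtain ⟨δ, ⟨hδ0, hδR⟩, hδ⟩ : ∃ δ ∈ Ioc 0 R, ∀ t ∈ Icc 0 δ, h 0 / 2 ≤ h t := by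
    have hev : ∀ᶠ t in 𝓝[≥] 0, h 0 / 2 ≤ h t := by
      rw [← nhdsWithin_Icc_eq_nhdsGE hR]
      exact (hh 0 (left_mem_Icc.2 hR.le)).eventually_const_le (half_lt_self h0)
    obtain ⟨δ, hδ0, hδ⟩ := mem_nhdsGE_iff_exists_Icc_subset.1 hev
    exact ⟨min δ R, ⟨lt_min hδ0 hR, min_le_right _ _⟩,
      fun t ht => hδ ⟨ht.1, ht.2.trans (min_le_left _ _)⟩⟩
  obtain ⟨m, hm, hmin⟩ := isCompact_Icc.exists_isMinOn (nonempty_Icc.2 hδR)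
    ((hp.continuousOn_weightedPrimitive hh).mono (Icc_subset_Icc_left hδ0.le))
  have hm0 : 0 < weightedPrimitive p h m := hpos m ⟨hδ0.trans_le hm.1, hm.2⟩
  rw [Metric.tendstoUniformlyOn_iff] at hkh
  filter_upwards [hkh (h 0 / 2) (by positivity), hkh (weightedPrimitive p h m / R) (by positivity)]
    with i hnear hfar r hr
  rcases le_total r δ with hrδ | hrδ
  · refine hp.weightedPrimitive_nonneg hr fun t ht => ?_
    have hclose := (le_abs_self _).trans_lt (hnear t ⟨ht.1, ht.2.trans hr.2⟩)
    linarith [hδ t ⟨ht.1, ht.2.trans hrδ⟩]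
  · have hclose : |weightedPrimitive p (fun t => h t - k i t) r| ≤ weightedPrimitive p h m := by
      refine (hp.abs_weightedPrimitive_le_mul (hh.sub (hk i)) hr fun t ht =>
        (hfar t ⟨ht.1, ht.2.trans hr.2⟩).le).trans ?_
      calc r * (weightedPrimitive p h m / R) ≤ R * (weightedPrimitive p h m / R) := by
            gcongr; exact hr.2
        _ = weightedPrimitive p h m := mul_div_cancel₀ _ hR.ne'
    rw [hp.weightedPrimitive_sub hh (hk i) hr] at hclose
    have hmr : weightedPrimitive p h m ≤ weightedPrimitive p h r := hmin ⟨hrδ, hr.2⟩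
    linarith [(le_abs_self _).trans hclose]

end IsRadialWeight

end WeightedPrimitive

section InitialValueProblem

/-- The right-hand sides `F(r, x)` on `[0, R]` for which `(p u')' = p F(r, u)` is globally and
uniquely solvable from `r = 0`: continuous, and Lipschitz in `x` uniformly in `r`. -/
structure IsLipschitzReaction (F : ℝ → ℝ → ℝ) (R : ℝ) (K : ℝ≥0) : Prop where
  continuousOn : ContinuousOn (Function.uncurry F) (Icc 0 R ×ˢ univ)
  lipschitzWith : ∀ t ∈ Icc 0 R, LipschitzWith K (F t)

/-- The derivative `r ↦ p(r)⁻¹ ∫₀ʳ p F(·, u)` of a solution `u` of `(p u')' = p F(r, u)`. -/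
noncomputable abbrev radialSlope (p : ℝ → ℝ) (F : ℝ → ℝ → ℝ) (u : ℝ → ℝ) : ℝ → ℝ :=
  weightedPrimitive p fun t => F t (u t)

/-- The integral operator whose fixed points are the solutions of `(p u')' = p F(r, u)` with
`u(0) = s` and `u'(0) = 0`. -/
noncomputable def picardMap (p : ℝ → ℝ) (F : ℝ → ℝ → ℝ) (s : ℝ) (u : ℝ → ℝ) (r : ℝ) : ℝ :=
  s + ∫ t in (0 : ℝ)..r, radialSlope p F u t

/-- `u` solves `(p u')' = p F(r, u)` on `[0, R]` with `u(0) = s` and `u'(0) = 0`, in integrated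
form, which avoids the singularity at `0`. -/
structure IsRadialSolution (p : ℝ → ℝ) (F : ℝ → ℝ → ℝ) (R s : ℝ) (u : ℝ → ℝ) : Prop where
  continuousOn : ContinuousOn u (Icc 0 R)
  eqOn : EqOn u (picardMap p F s u) (Icc 0 R)

variable {p u v : ℝ → ℝ} {F : ℝ → ℝ → ℝ} {R r s s' D : ℝ} {K : ℝ≥0}

theorem IsLipschitzReaction.continuousOn_comp (hF : IsLipschitzReaction F R K)
    (hu : ContinuousOn u (Icc 0 R)) : ContinuousOn (fun t => F t (u t)) (Icc 0 R) :=
  hF.continuousOn.comp (continuousOn_id.prodMk hu) fun _ ht => ⟨ht, mem_univ _⟩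

theorem IsLipschitzReaction.abs_sub_le (hF : IsLipschitzReaction F R K) (hr : r ∈ Icc 0 R)
    (x y : ℝ) : |F r x - F r y| ≤ K * |x - y| :=
  (hF.lipschitzWith r hr).dist_le_mul x y

theorem IsRadialWeight.continuousOn_radialSlope (hp : IsRadialWeight p R)
    (hF : IsLipschitzReaction F R K) (hu : ContinuousOn u (Icc 0 R)) :
    ContinuousOn (radialSlope p F u) (Icc 0 R) :=
  hp.continuousOn_weightedPrimitive (hF.continuousOn_comp hu)

theorem abs_radialSlope_sub_le (hp : IsRadialWeight p R) (hF : IsLipschitzReaction F R K)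
    (hu : ContinuousOn u (Icc 0 R)) (hv : ContinuousOn v (Icc 0 R)) {k : ℝ → ℝ}
    (hk : ContinuousOn k (Icc 0 R)) (huv : ∀ t ∈ Icc 0 R, |u t - v t| ≤ k t)
    (hr : r ∈ Icc 0 R) :
    |radialSlope p F u r - radialSlope p F v r| ≤ ∫ t in (0 : ℝ)..r, K * k t := by
  have hFu := hF.continuousOn_comp hu
  have hFv := hF.continuousOn_comp hv
  rw [← hp.weightedPrimitive_sub hFu hFv hr]
  refine hp.abs_weightedPrimitive_le_integral (hFu.sub hFv) (continuousOn_const.mul hk) hr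
    fun t ht => ?_
  have htR : t ∈ Icc 0 R := ⟨ht.1, ht.2.trans hr.2⟩
  exact (hF.abs_sub_le htR _ _).trans (mul_le_mul_of_nonneg_left (huv t htR) K.2)

/-- An exponential rate `c` for which `picardMap` contracts by the factor `1 / 4` in the weighted
supremum norm `sup |u r| * exp (-(c * r))`. -/
def picardRate (K : ℝ≥0) : ℝ :=
  2 * (K + 1)

theorem picardRate_pos (K : ℝ≥0) : 0 < picardRate K := by
  unfold picardRate
  positivity

theorem div_picardRate_sq_le (K : ℝ≥0) : K / picardRate K ^ 2 ≤ 1 / 4 := by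
  rw [picardRate, div_le_div_iff₀ (by positivity) (by norm_num)]
  nlinarith [NNReal.coe_nonneg K]

theorem abs_picardMap_sub_le (hp : IsRadialWeight p R) (hF : IsLipschitzReaction F R K)
    (hu : ContinuousOn u (Icc 0 R)) (hv : ContinuousOn v (Icc 0 R)) (hD : 0 ≤ D)
    (huv : ∀ t ∈ Icc 0 R, |u t - v t| ≤ D * Real.exp (picardRate K * t)) (hr : r ∈ Icc 0 R) :
    |picardMap p F s u r - picardMap p F s' v r| ≤
      |s - s'| + 1 / 4 * D * Real.exp (picardRate K * r) := by
  set c := picardRate K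
  have hc : 0 < c := picardRate_pos K
  have hslope : ∀ t ∈ Icc 0 R,
      |radialSlope p F u t - radialSlope p F v t| ≤ K * D / c * Real.exp (c * t) := by
    intro t ht
    refine (abs_radialSlope_sub_le hp hF hu hv (by fun_prop) huv ht).trans ?_
    simp only [← mul_assoc]
    exact integral_const_mul_exp_le (by positivity) hc t
  have hint : ∀ w : ℝ → ℝ, ContinuousOn w (Icc 0 R) →
      IntervalIntegrable (radialSlope p F w) MeasureTheory.volume 0 r := fun w hw =>
    ((hp.continuousOn_radialSlope hF hw).mono
      (Icc_subset_Icc_right hr.2)).intervalIntegrable_of_Icc hr.1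
  have hintegral : |∫ t in (0 : ℝ)..r, (radialSlope p F u t - radialSlope p F v t)| ≤
      1 / 4 * D * Real.exp (c * r) := calc
    _ ≤ ∫ t in (0 : ℝ)..r, K * D / c * Real.exp (c * t) := by
      rw [← Real.norm_eq_abs]
      refine intervalIntegral.norm_integral_le_of_norm_le hr.1
        (MeasureTheory.ae_of_all _ fun t ht => ?_) ?_
      · exact hslope t ⟨ht.1.le, ht.2.trans hr.2⟩
      · exact Continuous.intervalIntegrable (by fun_prop) _ _
    _ ≤ K * D / c / c * Real.exp (c * r) := integral_const_mul_exp_le (by positivity) hc r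
    _ = K / c ^ 2 * (D * Real.exp (c * r)) := by field_simp
    _ ≤ 1 / 4 * (D * Real.exp (c * r)) :=
      mul_le_mul_of_nonneg_right (div_picardRate_sq_le K) (by positivity)
    _ = 1 / 4 * D * Real.exp (c * r) := (mul_assoc _ _ _).symm
  rw [intervalIntegral.integral_sub (hint u hu) (hint v hv)] at hintegral
  simp only [picardMap]
  rw [add_sub_add_comm]
  exact (abs_add_le _ _).trans (add_le_add_right hintegral _)

/-- The function `r ↦ exp (c r) v(r)` on the line, with `c = picardRate K` and `v` extended by
constants outside `[0, R]`: its weighted norm is the supremum norm of `v`. -/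
noncomputable def expWeighted (K : ℝ≥0) (hR : 0 ≤ R) (v : C(Icc 0 R, ℝ)) (t : ℝ) : ℝ :=
  Real.exp (picardRate K * t) * IccExtend hR v t

theorem expWeighted_coe (K : ℝ≥0) (hR : 0 ≤ R) (v : C(Icc 0 R, ℝ)) (r : Icc 0 R) :
    expWeighted K hR v r = Real.exp (picardRate K * r) * v r := by
  rw [expWeighted, IccExtend_val]

theorem continuousOn_expWeighted (K : ℝ≥0) (hR : 0 ≤ R) (v : C(Icc 0 R, ℝ)) :
    ContinuousOn (expWeighted K hR v) (Icc 0 R) :=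
  (Continuous.mul (by fun_prop) v.continuous.Icc_extend').continuousOn

theorem abs_expWeighted_sub_le (K : ℝ≥0) (hR : 0 ≤ R) (v w : C(Icc 0 R, ℝ)) {t : ℝ}
    (ht : t ∈ Icc 0 R) :
    |expWeighted K hR v t - expWeighted K hR w t| ≤ dist v w * Real.exp (picardRate K * t) := by
  rw [expWeighted_coe K hR v ⟨t, ht⟩, expWeighted_coe K hR w ⟨t, ht⟩, ← mul_sub, abs_mul,
    Real.abs_exp, mul_comm]
  exact mul_le_mul_of_nonneg_right (ContinuousMap.dist_apply_le_dist (f := v) (g := w) ⟨t, ht⟩)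
    (Real.exp_pos _).le

theorem continuousOn_picardMap (hp : IsRadialWeight p R) (hF : IsLipschitzReaction F R K)
    (hu : ContinuousOn u (Icc 0 R)) : ContinuousOn (picardMap p F s u) (Icc 0 R) :=
  continuousOn_const.add (continuousOn_integral_Icc (hp.continuousOn_radialSlope hF hu))

/-- The conjugate of `picardMap` by `expWeighted`, a contraction of `C([0, R])` with its usual
norm. -/
noncomputable def weightedPicardMap (hp : IsRadialWeight p R) (hF : IsLipschitzReaction F R K)
    (hR : 0 ≤ R) (s : ℝ) (v : C(Icc 0 R, ℝ)) : C(Icc 0 R, ℝ) :=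
  ⟨fun r => Real.exp (-(picardRate K * r)) * picardMap p F s (expWeighted K hR v) r,
    Continuous.mul (by fun_prop)
      (continuousOn_picardMap hp hF (continuousOn_expWeighted K hR v)).domRestrict⟩

theorem contractingWith_weightedPicardMap (hp : IsRadialWeight p R)
    (hF : IsLipschitzReaction F R K) (hR : 0 ≤ R) (s : ℝ) :
    ContractingWith (1 / 4) (weightedPicardMap hp hF hR s) := by
  refine ⟨by rw [← NNReal.coe_lt_coe]; norm_num, LipschitzWith.of_dist_le_mul fun v w => ?_⟩
  rw [ContinuousMap.dist_le (by positivity)]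
  intro r
  have hdist := abs_picardMap_sub_le (s := s) (s' := s) hp hF (continuousOn_expWeighted K hR v)
    (continuousOn_expWeighted K hR w) dist_nonneg
    (fun _ ht => abs_expWeighted_sub_le K hR v w ht) r.2
  calc dist (weightedPicardMap hp hF hR s v r) (weightedPicardMap hp hF hR s w r)
      = Real.exp (-(picardRate K * r)) * |picardMap p F s (expWeighted K hR v) r -
          picardMap p F s (expWeighted K hR w) r| := by
        simp only [weightedPicardMap, ContinuousMap.coe_mk, Real.dist_eq]
        rw [← mul_sub, abs_mul, Real.abs_exp]
    _ ≤ Real.exp (-(picardRate K * r)) *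
          (|s - s| + 1 / 4 * dist v w * Real.exp (picardRate K * r)) := by gcongr
    _ = 1 / 4 * dist v w := by
        rw [sub_self, abs_zero, zero_add, Real.exp_neg]
        field_simp
    _ = (1 / 4 : ℝ≥0) * dist v w := by norm_num

theorem exists_isRadialSolution (hp : IsRadialWeight p R) (hF : IsLipschitzReaction F R K)
    (hR : 0 ≤ R) (s : ℝ) : ∃ u, IsRadialSolution p F R s u := by
  obtain ⟨v, hv⟩ : ∃ v, weightedPicardMap hp hF hR s v = v :=
    ⟨_, (contractingWith_weightedPicardMap hp hF hR s).fixedPoint_isFixedPt⟩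
  refine ⟨expWeighted K hR v, continuousOn_expWeighted K hR v, fun r hr => ?_⟩
  have hvr : Real.exp (-(picardRate K * r)) * picardMap p F s (expWeighted K hR v) r = v ⟨r, hr⟩ :=
    DFunLike.congr_fun hv ⟨r, hr⟩
  rw [expWeighted_coe K hR v ⟨r, hr⟩, ← hvr, ← mul_assoc, ← Real.exp_add, add_neg_cancel,
    Real.exp_zero, one_mul]

namespace IsRadialSolution

theorem apply_zero (hu : IsRadialSolution p F R s u) (hR : 0 ≤ R) : u 0 = s := by
  simpa [picardMap] using hu.eqOn (left_mem_Icc.2 hR)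

theorem hasDerivWithinAt (hu : IsRadialSolution p F R s u) (hp : IsRadialWeight p R)
    (hF : IsLipschitzReaction F R K) (hr : r ∈ Icc 0 R) :
    HasDerivWithinAt u (radialSlope p F u r) (Icc 0 R) r :=
  ((hasDerivWithinAt_integral_Icc (hp.continuousOn_radialSlope hF hu.continuousOn)
    hr).const_add s).congr hu.eqOn (hu.eqOn hr)

theorem monotoneOn (hu : IsRadialSolution p F R s u) (hp : IsRadialWeight p R)
    (hF : IsLipschitzReaction F R K) (hslope : ∀ r ∈ Icc 0 R, 0 ≤ radialSlope p F u r) :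
    MonotoneOn u (Icc 0 R) :=
  monotoneOn_of_forall_hasDerivWithinAt_nonneg (convex_Icc 0 R)
    (fun _ hr => hu.hasDerivWithinAt hp hF hr) hslope

theorem le_of_radialSlope_nonneg (hu : IsRadialSolution p F R s u) (hp : IsRadialWeight p R)
    (hF : IsLipschitzReaction F R K) (hslope : ∀ r ∈ Icc 0 R, 0 ≤ radialSlope p F u r)
    (hr : r ∈ Icc 0 R) : s ≤ u r := by
  have hR : 0 ≤ R := hr.1.trans hr.2
  simpa only [hu.apply_zero hR] using hu.monotoneOn hp hF hslope (left_mem_Icc.2 hR) hr hr.1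

theorem zero (hF0 : ∀ t ∈ Icc 0 R, F t 0 = 0) : IsRadialSolution p F R 0 0 := by
  refine ⟨continuousOn_const, fun r hr => ?_⟩
  have hslope : ∀ t ∈ uIcc 0 r, radialSlope p F 0 t = 0 := fun t ht => by
    rw [uIcc_of_le hr.1] at ht
    have hzero : ∀ τ ∈ uIcc 0 t, p τ * F τ 0 = 0 := fun τ hτ => by
      rw [uIcc_of_le ht.1] at hτ
      rw [hF0 τ ⟨hτ.1, hτ.2.trans (ht.2.trans hr.2)⟩, mul_zero]
    simp only [radialSlope, weightedPrimitive, Pi.zero_apply,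
      intervalIntegral.integral_congr hzero, intervalIntegral.integral_zero, zero_div]
  simp [picardMap, intervalIntegral.integral_congr hslope]

theorem exists_forall_abs_sub_le (hp : IsRadialWeight p R) (hF : IsLipschitzReaction F R K) :
    ∃ L > 0, ∀ s s' u v, IsRadialSolution p F R s u → IsRadialSolution p F R s' v →
      ∀ r ∈ Icc 0 R, |u r - v r| ≤ L * |s - s'| := by
  set c := picardRate K
  have hc : 0 < c := picardRate_pos K
  refine ⟨2 * Real.exp (c * R), by positivity, fun s s' u v hu hv r hr => ?_⟩
  obtain ⟨m, hm, hmax⟩ := isCompact_Icc.exists_isMaxOn ⟨r, hr⟩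
    (f := fun t => |u t - v t| * Real.exp (-(c * t)))
    ((hu.continuousOn.sub hv.continuousOn).abs.mul (by fun_prop))
  set D := |u m - v m| * Real.exp (-(c * m)) with hD_def
  have hD : 0 ≤ D := by positivity
  have hcancel : ∀ x t : ℝ, x * Real.exp (-(c * t)) * Real.exp (c * t) = x := fun x t => by
    rw [mul_assoc, ← Real.exp_add, neg_add_cancel, Real.exp_zero, mul_one]
  have hbound : ∀ t ∈ Icc 0 R, |u t - v t| ≤ D * Real.exp (c * t) := fun t ht => by
    rw [← hcancel |u t - v t| t]
    exact mul_le_mul_of_nonneg_right (hmax ht) (Real.exp_pos _).le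
  have hpicard : D * Real.exp (c * m) ≤ |s - s'| + 1 / 4 * D * Real.exp (c * m) := by
    calc D * Real.exp (c * m) = |picardMap p F s u m - picardMap p F s' v m| := by
          rw [hD_def, hcancel, hu.eqOn hm, hv.eqOn hm]
      _ ≤ |s - s'| + 1 / 4 * D * Real.exp (c * m) :=
          abs_picardMap_sub_le hp hF hu.continuousOn hv.continuousOn hD hbound hm
  have hDs : D ≤ 2 * |s - s'| := by
    have hexp : 1 ≤ Real.exp (c * m) := Real.one_le_exp (mul_nonneg hc.le hm.1)
    nlinarith [abs_nonneg (s - s')]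
  calc |u r - v r| ≤ D * Real.exp (c * r) := hbound r hr
    _ ≤ 2 * |s - s'| * Real.exp (c * R) := by
        gcongr
        exact hr.2
    _ = 2 * Real.exp (c * R) * |s - s'| := by ring

theorem tendstoUniformlyOn {u : ℝ → ℝ → ℝ} (hp : IsRadialWeight p R)
    (hF : IsLipschitzReaction F R K) (hu : ∀ s, IsRadialSolution p F R s (u s))
    (hv : IsRadialSolution p F R s v) : TendstoUniformlyOn u v (𝓝 s) (Icc 0 R) := by
  obtain ⟨L, hL, hle⟩ := exists_forall_abs_sub_le hp hF
  refine Metric.tendstoUniformlyOn_iff.2 fun ε hε => ?_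
  filter_upwards [Metric.ball_mem_nhds s (div_pos hε hL)] with s' hs' r hr
  rw [Metric.mem_ball', Real.dist_eq, lt_div_iff₀' hL] at hs'
  exact (hle s s' v (u s') hv (hu s') r hr).trans_lt hs'

theorem tendstoUniformlyOn_comp {u : ℝ → ℝ → ℝ} (hp : IsRadialWeight p R)
    (hF : IsLipschitzReaction F R K) (hu : ∀ s, IsRadialSolution p F R s (u s))
    (hv : IsRadialSolution p F R s v) :
    TendstoUniformlyOn (fun s t => F t (u s t)) (fun t => F t (v t)) (𝓝 s) (Icc 0 R) := by
  refine Metric.tendstoUniformlyOn_iff.2 fun ε hε => ?_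
  have hunif := tendstoUniformlyOn hp hF hu hv
  filter_upwards [Metric.tendstoUniformlyOn_iff.1 hunif (ε / (K + 1)) (by positivity)]
    with s' hs' r hr
  have hvu : |v r - u s' r| < ε / (K + 1) := hs' r hr
  rw [lt_div_iff₀' (by positivity)] at hvu
  calc |F r (v r) - F r (u s' r)| ≤ K * |v r - u s' r| := hF.abs_sub_le hr _ _
    _ ≤ (K + 1) * |v r - u s' r| := by gcongr; linarith
    _ < ε := hvu

theorem continuous_radialSlope {u : ℝ → ℝ → ℝ} (hp : IsRadialWeight p R)
    (hF : IsLipschitzReaction F R K) (hu : ∀ s, IsRadialSolution p F R s (u s))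
    (hr : r ∈ Icc 0 R) : Continuous fun s => radialSlope p F (u s) r :=
  continuous_iff_continuousAt.2 fun s =>
    hp.tendsto_weightedPrimitive (hF.continuousOn_comp (hu s).continuousOn)
      (fun s' => hF.continuousOn_comp (hu s').continuousOn)
      (tendstoUniformlyOn_comp hp hF hu (hu s)) hr

end IsRadialSolution

end InitialValueProblem

section Monotonicity

namespace IsRadialWeight

variable {p h z u : ℝ → ℝ} {R r : ℝ}

theorem le_mul_exp_of_le (hp : IsRadialWeight p R) (hh : ContinuousOn h (Icc 0 R))
    (hz : ∀ r ∈ Icc 0 R, HasDerivWithinAt z (weightedPrimitive p h r) (Icc 0 R) r)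
    (hslope : ∀ r ∈ Icc 0 R, 0 ≤ weightedPrimitive p h r) (hz0 : 0 ≤ z 0)
    (hhz : ∀ r ∈ Icc 0 R, h r ≤ z r) (hr : r ∈ Icc 0 R) :
    z r ≤ z 0 * Real.exp (R * r) := by
  have hmono := monotoneOn_of_forall_hasDerivWithinAt_nonneg (convex_Icc 0 R) hz hslope
  have h0 : (0 : ℝ) ∈ Icc 0 R := left_mem_Icc.2 (hr.1.trans hr.2)
  have hderiv_le : ∀ t ∈ Icc 0 R, weightedPrimitive p h t ≤ R * z t := fun t ht => by
    have hzt : 0 ≤ z t := hz0.trans (hmono h0 ht ht.1)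
    refine (hp.weightedPrimitive_le_mul hh ht hzt fun τ hτ => ?_).trans
      (mul_le_mul_of_nonneg_right ht.2 hzt)
    have hτR : τ ∈ Icc 0 R := ⟨hτ.1, hτ.2.trans ht.2⟩
    exact (hhz τ hτR).trans (hmono hτR ht hτ.2)
  have hanti := antitoneOn_mul_exp_neg (convex_Icc 0 R) hz hderiv_le h0 hr hr.1
  simp only [mul_zero, neg_zero, Real.exp_zero, mul_one, Real.exp_neg] at hanti
  rwa [← div_eq_mul_inv, div_le_iff₀ (Real.exp_pos _)] at hanti

theorem eq_zero_of_weightedPrimitive_eq_zero (hp : IsRadialWeight p R)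
    (hh : ContinuousOn h (Icc 0 R)) (hslope : ∀ r ∈ Icc 0 R, 0 ≤ weightedPrimitive p h r)
    (hr : r ∈ Ioo 0 R) (hzero : weightedPrimitive p h r = 0) : h r = 0 := by
  have hmin : IsLocalMin (fun x => ∫ t in (0 : ℝ)..x, p t * h t) r := by
    filter_upwards [Ioo_mem_nhds hr.1 hr.2] with t ht
    rw [← hp.mul_weightedPrimitive (Ioo_subset_Icc_self hr), hzero, mul_zero,
      ← hp.mul_weightedPrimitive (Ioo_subset_Icc_self ht)]
    exact mul_nonneg (hp.nonneg (Ioo_subset_Icc_self ht)) (hslope t (Ioo_subset_Icc_self ht))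
  exact (mul_eq_zero.1 (hmin.hasDerivAt_eq_zero (hp.hasDerivAt_integral_mul hh hr))).resolve_left
    (hp.pos r (Ioo_subset_Ioc_self hr)).ne'

theorem weightedPrimitive_le_of_weightedPrimitive_eq_zero (hp : IsRadialWeight p R)
    (hh : ContinuousOn h (Icc 0 R)) (hu : MonotoneOn u (Icc 0 R))
    (huh : MonotoneOn (fun t => u t - h t) (Icc 0 R)) (hr : r ∈ Icc 0 R)
    (hslope_r : weightedPrimitive p h r = 0) (hhr : h r = 0) {t : ℝ} (ht : t ∈ Ioc 0 r) :
    weightedPrimitive p h t ≤ p r / p t * r * (u r - u t) := by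
  have htR : t ∈ Icc 0 R := ⟨ht.1.le, ht.2.trans hr.2⟩
  have htail : p t * weightedPrimitive p h t = ∫ τ in t..r, -(p τ * h τ) := by
    have hadd := intervalIntegral.integral_interval_sub_left (hp.intervalIntegrable_mul hh hr)
      (hp.intervalIntegrable_mul hh htR)
    rw [intervalIntegral.integral_neg, ← hadd, ← hp.mul_weightedPrimitive hr,
      ← hp.mul_weightedPrimitive htR, hslope_r, mul_zero, zero_sub, neg_neg]
  have hintegrand : ∀ τ ∈ Icc t r, -(p τ * h τ) ≤ p r * (u r - u t) := by
    intro τ hτ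
    have hτR : τ ∈ Icc 0 R := ⟨htR.1.trans hτ.1, hτ.2.trans hr.2⟩
    have hsub : u τ - h τ ≤ u r - h r := huh hτR hr hτ.2
    have hut : u t ≤ u τ := hu htR hτR hτ.1
    calc -(p τ * h τ) = p τ * -h τ := by ring
      _ ≤ p τ * (u r - u t) := mul_le_mul_of_nonneg_left (by linarith) (hp.nonneg hτR)
      _ ≤ p r * (u r - u t) :=
          mul_le_mul_of_nonneg_right (hp.monotoneOn hτR hr hτ.2) (sub_nonneg.2 (hu htR hr ht.2))
  have hle : p t * weightedPrimitive p h t ≤ r * (p r * (u r - u t)) := calc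
    _ ≤ ∫ _ in t..r, p r * (u r - u t) := htail ▸ intervalIntegral.integral_mono_on ht.2
        ((hp.intervalIntegrable_mul hh htR).symm.trans (hp.intervalIntegrable_mul hh hr)).neg
        intervalIntegrable_const hintegrand
    _ = (r - t) * (p r * (u r - u t)) := by rw [intervalIntegral.integral_const, smul_eq_mul]
    _ ≤ r * (p r * (u r - u t)) := mul_le_mul_of_nonneg_right (by linarith [ht.1])
        (mul_nonneg (hp.nonneg hr) (sub_nonneg.2 (hu htR hr ht.2)))
  have hpt : 0 < p t := hp.pos t ⟨ht.1, htR.2⟩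
  rw [div_mul_eq_mul_div, div_mul_eq_mul_div, le_div_iff₀ hpt]
  linarith

/-- Backward Gronwall argument: the distance `u r - u t` to the end value satisfies a linear
differential inequality on every `[δ, r]` with `δ > 0` and vanishes at `t = r`. -/
theorem eqOn_const_of_weightedPrimitive_eq_zero (hp : IsRadialWeight p R)
    (hh : ContinuousOn h (Icc 0 R))
    (hu : ∀ r ∈ Icc 0 R, HasDerivWithinAt u (weightedPrimitive p h r) (Icc 0 R) r)
    (hslope : ∀ r ∈ Icc 0 R, 0 ≤ weightedPrimitive p h r)
    (huh : MonotoneOn (fun t => u t - h t) (Icc 0 R)) (hr : r ∈ Icc 0 R)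
    (hslope_r : weightedPrimitive p h r = 0) (hhr : h r = 0) :
    EqOn u (fun _ => u r) (Ioc 0 r) := by
  intro δ hδ
  have hsub : Icc δ r ⊆ Icc 0 R := Icc_subset_Icc hδ.1.le hr.2
  have hmono := monotoneOn_of_forall_hasDerivWithinAt_nonneg (convex_Icc 0 R) hu hslope
  have hpδ : 0 < p δ := hp.pos δ ⟨hδ.1, hδ.2.trans hr.2⟩
  have hderiv : ∀ t ∈ Icc δ r,
      HasDerivWithinAt (fun t => u t - u r) (weightedPrimitive p h t) (Icc δ r) t :=
    fun t ht => ((hu t (hsub ht)).mono hsub).sub_const _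
  have hderiv_le : ∀ t ∈ Icc δ r,
      weightedPrimitive p h t ≤ -(p r / p δ * r) * (u t - u r) := fun t ht => by
    calc weightedPrimitive p h t ≤ p r / p t * r * (u r - u t) :=
          hp.weightedPrimitive_le_of_weightedPrimitive_eq_zero hh hmono huh hr hslope_r hhr
            ⟨hδ.1.trans_le ht.1, ht.2⟩
      _ ≤ p r / p δ * r * (u r - u t) := by
          have hur := sub_nonneg.2 (hmono (hsub ht) hr ht.2)
          have hpr := hp.nonneg hr
          have hpt := hp.monotoneOn ⟨hδ.1.le, hδ.2.trans hr.2⟩ (hsub ht) ht.1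
          have hr0 := hr.1
          gcongr
      _ = -(p r / p δ * r) * (u t - u r) := by ring
  have hanti := antitoneOn_mul_exp_neg (convex_Icc δ r) hderiv hderiv_le
    (left_mem_Icc.2 hδ.2) (right_mem_Icc.2 hδ.2) hδ.2
  simp only [sub_self, zero_mul] at hanti
  exact le_antisymm (hmono (hsub (left_mem_Icc.2 hδ.2)) hr hδ.2)
    (sub_nonneg.1 (nonneg_of_mul_nonneg_left hanti (Real.exp_pos _)))

theorem weightedPrimitive_pos_of_nonneg (hp : IsRadialWeight p R)
    (hh : ContinuousOn h (Icc 0 R))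
    (hu : ∀ r ∈ Icc 0 R, HasDerivWithinAt u (weightedPrimitive p h r) (Icc 0 R) r)
    (hslope : ∀ r ∈ Icc 0 R, 0 ≤ weightedPrimitive p h r)
    (huh : MonotoneOn (fun t => u t - h t) (Icc 0 R)) (h0 : 0 < h 0) (hr : r ∈ Ioo 0 R) :
    0 < weightedPrimitive p h r := by
  refine (hslope r (Ioo_subset_Icc_self hr)).lt_of_ne' fun hslope_r => ?_
  have hconst := hp.eqOn_const_of_weightedPrimitive_eq_zero hh hu hslope huh
    (Ioo_subset_Icc_self hr) hslope_r
    (hp.eq_zero_of_weightedPrimitive_eq_zero hh hslope hr hslope_r)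
  have hh_zero : ∀ t ∈ Ioo 0 r, h t = 0 := fun t ht => by
    have htR : t ∈ Ioo 0 R := ⟨ht.1, ht.2.trans hr.2⟩
    have hderiv := (hu t (Ioo_subset_Icc_self htR)).hasDerivAt (Icc_mem_nhds htR.1 htR.2)
    have hev : u =ᶠ[𝓝 t] fun _ => u r :=
      mem_of_superset (Ioo_mem_nhds ht.1 ht.2) fun x hx => hconst (Ioo_subset_Ioc_self hx)
    exact hp.eq_zero_of_weightedPrimitive_eq_zero hh hslope htR
      (hderiv.unique ((hasDerivAt_const t (u r)).congr_of_eventuallyEq hev))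
  have hlim : Tendsto h (𝓝[>] 0) (𝓝 (h 0)) := by
    rw [← nhdsWithin_Ioc_eq_nhdsGT (hr.1.trans hr.2)]
    exact (hh 0 (left_mem_Icc.2 (hr.1.trans hr.2).le)).mono Ioc_subset_Icc_self
  have hlim_zero : Tendsto h (𝓝[>] 0) (𝓝 0) := tendsto_const_nhds.congr' <|
    mem_of_superset (Ioo_mem_nhdsGT hr.1) fun t ht => (hh_zero t ht).symm
  exact h0.ne' (tendsto_nhds_unique hlim hlim_zero)

end IsRadialWeight

end Monotonicity

section Shooting

/-- The right-hand sides `F(r, x)` for which shooting from `u(0) ∈ (0, σ)` produces a nondecreasing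
solution of `(p u')' = p F(r, u)`, `u'(0) = u'(R) = 0`. The function `x - F(r, x)`, which stands for
`a(r) f(x)`, is nondecreasing in both variables, `F` is nonnegative up to a level `ε > 0`, and `σ`
is the first positive zero of `F(0, ·)`, but not a zero of `F(R, ·)`. -/
structure IsShootingReaction (F : ℝ → ℝ → ℝ) (R : ℝ) (K : ℝ≥0) (σ : ℝ) : Prop
    extends IsLipschitzReaction F R K where
  zero_right : ∀ t ∈ Icc 0 R, F t 0 = 0
  monotoneOn_sub : MonotoneOn (fun q : ℝ × ℝ => q.2 - F q.1 q.2) (Icc 0 R ×ˢ univ)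
  exists_nonneg : ∃ ε > 0, ∀ t ∈ Icc 0 R, ∀ x ≤ ε, 0 ≤ F t x
  pos : ∀ x ∈ Ioo 0 σ, 0 < F 0 x
  eq_zero : F 0 σ = 0
  neg : F R σ < 0

variable {p u : ℝ → ℝ} {F : ℝ → ℝ → ℝ} {R r s c σ : ℝ} {K : ℝ≥0}

theorem IsShootingReaction.le_sub (hF : IsShootingReaction F R K σ) (hr : r ∈ Icc 0 R) {x : ℝ}
    (hc : F 0 c = 0) (hcx : c ≤ x) : F r x ≤ x - c := by
  have hle : c - F 0 c ≤ x - F r x :=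
    hF.monotoneOn_sub (a := (0, c)) (b := (r, x)) ⟨left_mem_Icc.2 (hr.1.trans hr.2), mem_univ _⟩
      ⟨hr, mem_univ _⟩ ⟨hr.1, hcx⟩
  linarith

theorem IsShootingReaction.equilibrium_pos (hF : IsShootingReaction F R K σ) (hR : 0 ≤ R) :
    0 < σ := by
  obtain ⟨ε, hε, hnonneg⟩ := hF.exists_nonneg
  by_contra! hσ
  exact hF.neg.not_ge (hnonneg R (right_mem_Icc.2 hR) σ (hσ.trans hε.le))

namespace IsRadialSolution

theorem sub_le_mul_exp (hu : IsRadialSolution p F R s u) (hp : IsRadialWeight p R)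
    (hF : IsShootingReaction F R K σ) (hslope : ∀ r ∈ Icc 0 R, 0 ≤ radialSlope p F u r)
    (hc : F 0 c = 0) (hcs : c ≤ s) (hr : r ∈ Icc 0 R) :
    u r - c ≤ (s - c) * Real.exp (R * r) := by
  have hFu : ∀ t ∈ Icc 0 R, F t (u t) ≤ u t - c := fun t ht =>
    hF.le_sub ht hc (hcs.trans (hu.le_of_radialSlope_nonneg hp hF.1 hslope ht))
  have hu0 : u 0 = s := hu.apply_zero (hr.1.trans hr.2)
  simpa only [hu0] using hp.le_mul_exp_of_le (z := fun t => u t - c)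
    (hF.continuousOn_comp hu.continuousOn)
    (fun t ht => (hu.hasDerivWithinAt hp hF.1 ht).sub_const c) hslope
    (by rw [hu0]; exact sub_nonneg.2 hcs) hFu hr

theorem le_mul_exp (hu : IsRadialSolution p F R s u) (hp : IsRadialWeight p R)
    (hF : IsShootingReaction F R K σ) (hslope : ∀ r ∈ Icc 0 R, 0 ≤ radialSlope p F u r)
    (hs : 0 ≤ s) (hr : r ∈ Icc 0 R) : u r ≤ s * Real.exp (R * r) := by
  have h0 : (0 : ℝ) ∈ Icc 0 R := left_mem_Icc.2 (hr.1.trans hr.2)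
  simpa only [sub_zero] using hu.sub_le_mul_exp hp hF hslope (hF.zero_right 0 h0) hs hr

theorem radialSlope_pos (hu : IsRadialSolution p F R s u) (hp : IsRadialWeight p R)
    (hF : IsShootingReaction F R K σ) (hslope : ∀ r ∈ Icc 0 R, 0 ≤ radialSlope p F u r)
    (hs : s ∈ Ioo 0 σ) (hr : r ∈ Ioo 0 R) : 0 < radialSlope p F u r := by
  have hmono := hu.monotoneOn hp hF.1 hslope
  have hsub : MonotoneOn (fun t => u t - F t (u t)) (Icc 0 R) := fun t ht τ hτ htτ =>
    hF.monotoneOn_sub (a := (t, u t)) (b := (τ, u τ)) ⟨ht, mem_univ _⟩ ⟨hτ, mem_univ _⟩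
      ⟨htτ, hmono ht hτ htτ⟩
  refine hp.weightedPrimitive_pos_of_nonneg (hF.continuousOn_comp hu.continuousOn)
    (fun t ht => hu.hasDerivWithinAt hp hF.1 ht) hslope hsub ?_ hr
  rw [hu.apply_zero (hr.1.trans hr.2).le]
  exact hF.pos s hs

theorem strictMonoOn (hu : IsRadialSolution p F R s u) (hp : IsRadialWeight p R)
    (hF : IsShootingReaction F R K σ) (hslope : ∀ r ∈ Icc 0 R, 0 ≤ radialSlope p F u r)
    (hs : s ∈ Ioo 0 σ) : StrictMonoOn u (Icc 0 R) := by
  refine strictMonoOn_of_hasDerivWithinAt_pos (convex_Icc 0 R) hu.continuousOn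
    (f' := radialSlope p F u) (fun r hr => ?_) fun r hr => ?_
  · exact (hu.hasDerivWithinAt hp hF.1 (interior_subset hr)).mono interior_subset
  · rw [interior_Icc] at hr
    exact hu.radialSlope_pos hp hF hslope hs hr

theorem exists_radialSlope_neg (hu : IsRadialSolution p F R σ u) (hp : IsRadialWeight p R)
    (hF : IsShootingReaction F R K σ) (hR : 0 < R) :
    ∃ r ∈ Icc 0 R, radialSlope p F u r < 0 := by
  by_contra! hslope
  have hconst : ∀ t ∈ Icc 0 R, u t = σ := fun t ht => by
    have hle := hu.sub_le_mul_exp hp hF hslope hF.eq_zero le_rfl ht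
    rw [sub_self, zero_mul, sub_nonpos] at hle
    exact hle.antisymm (hu.le_of_radialSlope_nonneg hp hF.1 hslope ht)
  have hpos : 0 < weightedPrimitive p (fun t => -F t (u t)) R := by
    refine hp.weightedPrimitive_pos (hF.continuousOn_comp hu.continuousOn).neg ⟨hR, le_rfl⟩
      (fun t ht => ?_) ?_
    · rw [hconst t ht, neg_nonneg, ← sub_self σ]
      exact hF.le_sub ht hF.eq_zero le_rfl
    · rw [hconst R (right_mem_Icc.2 hR.le), neg_pos]
      exact hF.neg
  rw [weightedPrimitive_neg] at hpos
  exact (hslope R (right_mem_Icc.2 hR.le)).not_gt (neg_pos.1 hpos)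

theorem eventually_radialSlope_nonneg_zero {u : ℝ → ℝ → ℝ} (hp : IsRadialWeight p R)
    (hF : IsShootingReaction F R K σ) (hu : ∀ s, IsRadialSolution p F R s (u s)) :
    ∀ᶠ s in 𝓝 0, ∀ r ∈ Icc 0 R, 0 ≤ radialSlope p F (u s) r := by
  obtain ⟨ε, hε, hnonneg⟩ := hF.exists_nonneg
  have hunif := tendstoUniformlyOn hp hF.1 hu (zero hF.zero_right)
  filter_upwards [Metric.tendstoUniformlyOn_iff.1 hunif ε hε] with s hs r hr
  refine hp.weightedPrimitive_nonneg hr fun t ht => ?_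
  have htR : t ∈ Icc 0 R := ⟨ht.1, ht.2.trans hr.2⟩
  have hut : |u s t| < ε := by simpa using hs t htR
  exact hnonneg t htR _ ((le_abs_self _).trans hut.le)

theorem eventually_radialSlope_nonneg {u : ℝ → ℝ → ℝ} (hp : IsRadialWeight p R)
    (hF : IsShootingReaction F R K σ) (hu : ∀ s, IsRadialSolution p F R s (u s)) (hR : 0 < R)
    (hs : s ∈ Ioo 0 σ) (hslope : ∀ r ∈ Icc 0 R, 0 ≤ radialSlope p F (u s) r)
    (hslope_R : radialSlope p F (u s) R ≠ 0) :
    ∀ᶠ s' in 𝓝 s, ∀ r ∈ Icc 0 R, 0 ≤ radialSlope p F (u s') r := by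
  have hcont := fun s => hF.continuousOn_comp (hu s).continuousOn
  refine hp.eventually_weightedPrimitive_nonneg hR (hcont s) hcont
    (tendstoUniformlyOn_comp hp hF.1 hu (hu s)) ?_ fun r hr => ?_
  · rw [(hu s).apply_zero hR.le]
    exact hF.pos s hs
  · rcases hr.2.eq_or_lt with rfl | hrR
    · exact (hslope r (Ioc_subset_Icc_self hr)).lt_of_ne' hslope_R
    · exact (hu s).radialSlope_pos hp hF hslope hs ⟨hr.1, hrR⟩

theorem exists_radialSlope_eq_zero (hp : IsRadialWeight p R) (hF : IsShootingReaction F R K σ)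
    (hR : 0 < R) :
    ∃ s ∈ Ioo 0 σ, ∃ u, IsRadialSolution p F R s u ∧
      (∀ r ∈ Icc 0 R, 0 ≤ radialSlope p F u r) ∧ radialSlope p F u R = 0 := by
  by_contra! hne
  choose u hu using exists_isRadialSolution hp hF.1 hR.le
  set B : Set ℝ := {s | ∀ r ∈ Icc 0 R, 0 ≤ radialSlope p F (u s) r}
  have hclosed : IsClosed B := by
    simp only [B, ofPred_forall]
    exact isClosed_biInter fun r hr =>
      isClosed_le continuous_const (continuous_radialSlope hp hF.1 hu hr)
  have hzero : B ∈ 𝓝 0 := eventually_radialSlope_nonneg_zero hp hF hu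
  have hnhds : ∀ s ∈ B ∩ Ico 0 σ, B ∈ 𝓝 s := by
    rintro s ⟨hsB, hs0, hsσ⟩
    rcases hs0.eq_or_lt with rfl | hs0
    · exact hzero
    · exact eventually_radialSlope_nonneg hp hF hu hR ⟨hs0, hsσ⟩ hsB
        (hne s ⟨hs0, hsσ⟩ (u s) (hu s) hsB)
  have hsub : Icc 0 σ ⊆ B := (hclosed.inter isClosed_Icc).Icc_subset_of_forall_mem_nhdsWithin
    (mem_of_mem_nhds hzero) fun s hs => mem_nhdsWithin_of_mem_nhds (hnhds s hs)
  obtain ⟨r, hr, hneg⟩ := (hu σ).exists_radialSlope_neg hp hF hR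
  exact hneg.not_ge (hsub (right_mem_Icc.2 (hF.equilibrium_pos hR.le).le) r hr)

end IsRadialSolution

end Shooting

section RadialWeight

/-- The integrating factor `r ^ d * exp (-∫₀ʳ b(t) t dt)` of the operator
`-u'' + (b(r) r - d / r) u'`. -/
noncomputable def radialWeight (d : ℝ) (b : ℝ → ℝ) (r : ℝ) : ℝ :=
  r ^ d * Real.exp (-∫ t in (0 : ℝ)..r, b t * t)

variable {d R r : ℝ} {b : ℝ → ℝ}

theorem radialWeight_pos (hr : 0 < r) : 0 < radialWeight d b r :=
  mul_pos (Real.rpow_pos_of_pos hr d) (Real.exp_pos _)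

theorem hasDerivAt_radialWeight (hb : ContinuousOn b (Icc 0 R)) (hr : r ∈ Ioo 0 R) :
    HasDerivAt (radialWeight d b) (radialWeight d b r * (d / r - b r * r)) r := by
  have hint : HasDerivAt (fun x => ∫ t in (0 : ℝ)..x, b t * t) (b r * r) r :=
    (hasDerivWithinAt_integral_Icc (hb.mul continuousOn_id)
      (Ioo_subset_Icc_self hr)).hasDerivAt (Icc_mem_nhds hr.1 hr.2)
  refine ((Real.hasDerivAt_rpow_const (Or.inl hr.1.ne')).mul hint.fun_neg.exp).congr_deriv ?_
  rw [Real.rpow_sub_one hr.1.ne', radialWeight]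
  ring

theorem isRadialWeight_radialWeight (hR : 0 ≤ R) (hb : ContinuousOn b (Icc 0 R))
    (hbd : ∀ r ∈ Icc 0 R, b r * r ^ 2 ≤ d) : IsRadialWeight (radialWeight d b) R := by
  have hd : 0 ≤ d := by simpa using hbd 0 (left_mem_Icc.2 hR)
  have hcont : ContinuousOn (radialWeight d b) (Icc 0 R) :=
    (continuousOn_id.rpow_const fun _ _ => Or.inr hd).mul
      (continuousOn_integral_Icc (hb.mul continuousOn_id)).neg.rexp
  refine ⟨hcont, ?_, mul_nonneg (Real.rpow_nonneg le_rfl d) (Real.exp_pos _).le,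
    fun r hr => radialWeight_pos hr.1⟩
  refine monotoneOn_of_hasDerivWithinAt_nonneg
    (f' := fun r => radialWeight d b r * (d / r - b r * r)) (convex_Icc 0 R) hcont
    (fun r hr => ?_) fun r hr => ?_ <;> rw [interior_Icc] at hr
  · exact (hasDerivAt_radialWeight hb hr).hasDerivWithinAt
  · refine mul_nonneg (radialWeight_pos hr.1).le (sub_nonneg.2 ?_)
    rw [le_div_iff₀ hr.1, mul_assoc, ← sq]
    exact hbd r (Ioo_subset_Icc_self hr)

theorem hasDerivAt_weightedPrimitive_radialWeight (hR : 0 ≤ R) (hb : ContinuousOn b (Icc 0 R))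
    (hbd : ∀ r ∈ Icc 0 R, b r * r ^ 2 ≤ d) {h : ℝ → ℝ} (hh : ContinuousOn h (Icc 0 R))
    (hr : r ∈ Ioo 0 R) :
    HasDerivAt (weightedPrimitive (radialWeight d b) h)
      (h r - (d / r - b r * r) * weightedPrimitive (radialWeight d b) h r) r := by
  have hderiv := (isRadialWeight_radialWeight hR hb hbd).hasDerivAt_weightedPrimitive hh hr
    (hasDerivAt_radialWeight hb hr)
  rwa [mul_div_cancel_left₀ _ (radialWeight_pos hr.1).ne'] at hderiv

end RadialWeight

section Reaction

/-- The reaction term `x - a(t) f(x)`, with `x` replaced by its projection to `[0, C]` in order to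
make it globally Lipschitz. -/
noncomputable def truncatedReaction (a f : ℝ → ℝ) {C : ℝ} (hC : 0 ≤ C) (t x : ℝ) : ℝ :=
  (projIcc 0 C hC x : ℝ) - a t * f (projIcc 0 C hC x)

variable {a f : ℝ → ℝ} {R C σ c : ℝ}

theorem truncatedReaction_of_mem (hC : 0 ≤ C) (t : ℝ) {x : ℝ} (hx : x ∈ Icc 0 C) :
    truncatedReaction a f hC t x = x - a t * f x := by
  rw [truncatedReaction, projIcc_of_mem hC hx]

theorem exists_isLipschitzReaction_truncatedReaction (hC : 0 ≤ C)
    (ha : ContinuousOn a (Icc 0 R)) (hf : LocallyLipschitzOn (Ici 0) f) :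
    ∃ K, IsLipschitzReaction (truncatedReaction a f hC) R K := by
  obtain ⟨M, hM⟩ := isCompact_Icc.exists_bound_of_continuousOn ha
  obtain ⟨L, hL⟩ := (hf.mono fun x (hx : x ∈ Icc 0 C) => hx.1).exists_lipschitzOnWith_of_compact
    isCompact_Icc
  have hproj : LipschitzWith 1 fun x => (projIcc 0 C hC x : ℝ) := LipschitzWith.projIcc hC
  have hf_proj : LipschitzWith L fun x => f (projIcc 0 C hC x) :=
    mul_one L ▸ hL.to_restrict.comp (LipschitzWith.projIcc hC)
  refine ⟨1 + M.toNNReal * L, ?_, fun t ht => hproj.sub ?_⟩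
  · exact (hproj.continuous.comp continuous_snd).continuousOn.sub
      ((ha.comp continuousOn_fst fun q hq => hq.1).mul
        (hf_proj.continuous.comp continuous_snd).continuousOn)
  · refine LipschitzWith.of_dist_le_mul fun x y => ?_
    rw [Real.dist_eq, ← mul_sub, abs_mul, NNReal.coe_mul, mul_assoc]
    exact mul_le_mul ((hM t ht).trans (Real.le_coe_toNNReal M)) (hf_proj.dist_le_mul x y)
      (abs_nonneg _) NNReal.zero_le_coe

theorem monotoneOn_sub_truncatedReaction (hC : 0 ≤ C) (ha : MonotoneOn a (Icc 0 R))
    (ha0 : 0 ≤ a 0) (hf : MonotoneOn f (Ici 0)) (hf0 : 0 ≤ f 0) :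
    MonotoneOn (fun q : ℝ × ℝ => q.2 - truncatedReaction a f hC q.1 q.2) (Icc 0 R ×ˢ univ) := by
  rintro ⟨t, x⟩ ⟨ht, -⟩ ⟨τ, y⟩ ⟨hτ, -⟩ ⟨htτ : t ≤ τ, hxy : x ≤ y⟩
  have hproj : (projIcc 0 C hC y : ℝ) - projIcc 0 C hC x ≤ y - x := by
    have hdist := (le_abs_self _).trans ((LipschitzWith.projIcc hC).dist_le_mul y x)
    rwa [NNReal.coe_one, one_mul, Real.dist_eq, abs_of_nonneg (sub_nonneg.2 hxy)] at hdist
  have hmem : ∀ z, (projIcc 0 C hC z : ℝ) ∈ Ici (0 : ℝ) := fun z => (projIcc 0 C hC z).2.1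
  have hτ0 : 0 ≤ a τ := ha0.trans (ha (left_mem_Icc.2 (hτ.1.trans hτ.2)) hτ hτ.1)
  have hfx : 0 ≤ f (projIcc 0 C hC x) := hf0.trans (hf self_mem_Ici (hmem x) (hmem x))
  have hmul : a t * f (projIcc 0 C hC x) ≤ a τ * f (projIcc 0 C hC y) :=
    mul_le_mul (ha ht hτ htτ) (hf (hmem x) (hmem y) (monotone_projIcc hC hxy)) hfx hτ0
  simp only [truncatedReaction]
  linarith

theorem truncatedReaction_nonneg (hC : 0 ≤ C) (ha : MonotoneOn a (Icc 0 R))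
    (hf : ∀ x ∈ Ici 0, 0 ≤ f x) {ε : ℝ} (hε : 0 ≤ ε) (hfε : ∀ x ∈ Icc 0 ε, a R * f x ≤ x)
    {t x : ℝ} (ht : t ∈ Icc 0 R) (hx : x ≤ ε) : 0 ≤ truncatedReaction a f hC t x := by
  have hproj : (projIcc 0 C hC x : ℝ) ∈ Icc 0 ε := by
    refine ⟨(projIcc 0 C hC x).2.1, ?_⟩
    rw [coe_projIcc]
    exact max_le hε ((min_le_right _ _).trans hx)
  refine sub_nonneg.2 (le_trans ?_ (hfε _ hproj))
  exact mul_le_mul_of_nonneg_right (ha ht (right_mem_Icc.2 (ht.1.trans ht.2)) ht.2)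
    (hf _ hproj.1)

theorem exists_first_fixedPoint {A ε S : ℝ} (hf : ContinuousOn f (Ici 0))
    (hf_nonneg : ∀ x ∈ Ici 0, 0 ≤ f x) (hcA : c < A) (hε : 0 < ε)
    (hfε : ∀ x ∈ Icc 0 ε, A * f x ≤ x) (hS : 0 < S) (hfS : S < c * f S) :
    ∃ σ > 0, c * f σ = σ ∧ ∀ x ∈ Ioo 0 σ, c * f x < x := by
  have hlt : ∀ x ∈ Ioc 0 ε, c * f x < x := fun x hx => by
    rcases (hf_nonneg x hx.1.le).eq_or_lt with hfx | hfx
    · rw [← hfx, mul_zero]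
      exact hx.1
    · exact (mul_lt_mul_of_pos_right hcA hfx).trans_le (hfε x (Ioc_subset_Icc_self hx))
  have hεS : ε < S := by
    by_contra! hSε
    exact hfS.not_gt (hlt S ⟨hS, hSε⟩)
  have hcont : ContinuousOn (fun x => x - c * f x) (Icc ε S) :=
    continuousOn_id.sub (continuousOn_const.mul (hf.mono fun x hx => hε.le.trans hx.1))
  obtain ⟨σ, hσ, hzero, hpos⟩ := exists_first_zero hεS.le hcont
    (sub_pos.2 (hlt ε ⟨hε, le_rfl⟩)) (sub_neg.2 hfS)
  refine ⟨σ, hε.trans_le hσ.1, (sub_eq_zero.1 hzero).symm, fun x hx => ?_⟩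
  rcases le_total x ε with hxε | hxε
  · exact hlt x ⟨hx.1, hxε⟩
  · exact sub_pos.1 (hpos x ⟨hxε, hx.2⟩)

theorem exists_isShootingReaction_truncatedReaction (ha : ContinuousOn a (Icc 0 R))
    (ha_mono : MonotoneOn a (Icc 0 R)) (ha0 : 0 ≤ a 0) (ha_lt : a 0 < a R)
    (hf : LocallyLipschitzOn (Ici 0) f) (hf_mono : MonotoneOn f (Ici 0)) (hf0 : f 0 = 0)
    (hf_small : ∃ ε > 0, ∀ x ∈ Icc 0 ε, a R * f x ≤ x) (hσ : 0 < σ) (hfσ : a 0 * f σ = σ)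
    (hlt : ∀ x ∈ Ioo 0 σ, a 0 * f x < x) (hC : 0 ≤ C) (hσC : σ ≤ C) :
    ∃ K, IsShootingReaction (truncatedReaction a f hC) R K σ := by
  obtain ⟨K, hK⟩ := exists_isLipschitzReaction_truncatedReaction hC ha hf
  obtain ⟨ε, hε, hfε⟩ := hf_small
  have hf_nonneg : ∀ x ∈ Ici 0, 0 ≤ f x := fun x hx => hf0 ▸ hf_mono self_mem_Ici hx hx
  have hσ_mem : σ ∈ Icc 0 C := ⟨hσ.le, hσC⟩
  refine ⟨K, hK, fun t _ => ?_, monotoneOn_sub_truncatedReaction hC ha_mono ha0 hf_mono hf0.ge,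
    ⟨ε, hε, fun t ht x hx => truncatedReaction_nonneg hC ha_mono hf_nonneg hε.le hfε ht hx⟩,
    fun x hx => ?_, ?_, ?_⟩
  · rw [truncatedReaction_of_mem hC t (left_mem_Icc.2 hC), hf0, mul_zero, sub_zero]
  · rw [truncatedReaction_of_mem hC 0 ⟨hx.1.le, hx.2.le.trans hσC⟩]
    exact sub_pos.2 (hlt x hx)
  · rw [truncatedReaction_of_mem hC 0 hσ_mem, hfσ, sub_self]
  · have hfσ_pos : 0 < f σ := pos_of_mul_pos_right (hfσ.symm ▸ hσ) ha0
    rw [truncatedReaction_of_mem hC R hσ_mem, sub_neg]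
    exact hfσ.symm.trans_lt (mul_lt_mul_of_pos_right ha_lt hfσ_pos)

end Reaction

theorem stmt_1_general {d R : ℝ} (hR : 0 < R) {a b f : ℝ → ℝ}
    (ha : ContinuousOn a (Icc 0 R)) (ha_mono : MonotoneOn a (Icc 0 R)) (ha_lt : a 0 < a R)
    (hb : ContinuousOn b (Icc 0 R)) (hbd : ∀ r ∈ Icc 0 R, b r * r ^ 2 ≤ d)
    (hf : LocallyLipschitzOn (Ici 0) f) (hf_mono : MonotoneOn f (Ici 0)) (hf0 : f 0 = 0)
    (hf_small : ∃ ε > 0, ∀ x ∈ Icc 0 ε, a R * f x ≤ x) (hf_large : ∃ S > 0, S < a 0 * f S) :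
    ∃ u u' u'' : ℝ → ℝ,
      (∀ r ∈ Icc 0 R, HasDerivWithinAt u (u' r) (Icc 0 R) r) ∧
      ContinuousOn u' (Icc 0 R) ∧
      (∀ r ∈ Ioo 0 R, HasDerivAt u' (u'' r) r) ∧
      u' 0 = 0 ∧ u' R = 0 ∧
      (∀ r ∈ Icc 0 R, 0 < u r) ∧
      StrictMonoOn u (Icc 0 R) ∧
      (∀ r ∈ Ioo 0 R, -u'' r + (b r * r - d / r) * u' r + u r = a r * f (u r)) := by
  obtain ⟨ε, hε, hfε⟩ := hf_small
  obtain ⟨S, hS, hfS⟩ := hf_large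
  have hf_nonneg : ∀ x ∈ Ici 0, 0 ≤ f x := fun x hx => hf0 ▸ hf_mono self_mem_Ici hx hx
  have ha0 : 0 < a 0 := pos_of_mul_pos_left (hS.trans hfS) (hf_nonneg S hS.le)
  obtain ⟨σ, hσ, hfσ, hlt⟩ :=
    exists_first_fixedPoint hf.continuousOn hf_nonneg ha_lt hε hfε hS hfS
  have hσC : σ ≤ σ * Real.exp (R * R) :=
    le_mul_of_one_le_right hσ.le (Real.one_le_exp (by positivity))
  have hp := isRadialWeight_radialWeight hR.le hb hbd
  obtain ⟨K, hF⟩ := exists_isShootingReaction_truncatedReaction ha ha_mono ha0.le ha_lt hf hf_mono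
    hf0 ⟨ε, hε, hfε⟩ hσ hfσ hlt (hσ.le.trans hσC) hσC
  obtain ⟨s, hs, u, hu, hslope, hslope_R⟩ := IsRadialSolution.exists_radialSlope_eq_zero hp hF hR
  have hpos : ∀ r ∈ Icc 0 R, 0 < u r := fun r hr =>
    hs.1.trans_le (hu.le_of_radialSlope_nonneg hp hF.1 hslope hr)
  refine ⟨u, _, _, fun r hr => hu.hasDerivWithinAt hp hF.1 hr,
    hp.continuousOn_radialSlope hF.1 hu.continuousOn,
    fun r hr => hasDerivAt_weightedPrimitive_radialWeight hR.le hb hbd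
      (hF.continuousOn_comp hu.continuousOn) hr,
    weightedPrimitive_zero _ _, hslope_R, hpos,
    hu.strictMonoOn hp hF hslope hs, fun r hr => ?_⟩
  have hrR := Ioo_subset_Icc_self hr
  have hle : u r ≤ σ * Real.exp (R * R) := by
    refine (hu.le_mul_exp hp hF hslope hs.1.le hrR).trans ?_
    gcongr
    exacts [hs.2.le, hrR.2]
  rw [truncatedReaction_of_mem _ r ⟨(hpos r hrR).le, hle⟩]
  ring

/-- Existence of a nonconstant nondecreasing positive radial solution of the Neumann
problem `-Δu + b(|x|) x·∇u + u = a(|x|) f(u)` in the unit ball, in radial coordinates. -/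
theorem stmt_1 (N : ℕ) (hN : 2 ≤ N) (a b f : ℝ → ℝ)
    (ha_diff : ContDiffOn ℝ 1 a (Icc 0 1))
    (ha_mono : MonotoneOn a (Icc 0 1))
    (ha_nonconst : ∃ r ∈ Icc (0:ℝ) 1, ∃ s ∈ Icc (0:ℝ) 1, a r ≠ a s)
    (ha0 : 0 < a 0)
    (hb_cont : ContinuousOn b (Icc 0 1))
    (hb_nonpos : ∀ r ∈ Icc (0:ℝ) 1, b r ≤ 0)
    (hrb_diff : ∀ r ∈ Ioo (0:ℝ) 1, DifferentiableAt ℝ (fun t => b t * t) r)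
    (hrb : ∀ r ∈ Ioo (0:ℝ) 1,
      -1 - ((N : ℝ) - 1) / r ^ 2 < deriv (fun t => b t * t) r)
    (hf_diff : ContDiffOn ℝ 1 f (Ici 0))
    (hf_mono : MonotoneOn f (Ici 0))
    (hf0 : f 0 = 0)
    (hf'0 : derivWithin f (Ici 0) 0 = 0)
    (hf_liminf : ((1 / a 0 : ℝ) : EReal) <
      Filter.liminf (fun s : ℝ => ((f s / s : ℝ) : EReal)) Filter.atTop) :
    ∃ u u' u'' : ℝ → ℝ,
      (∀ r ∈ Icc (0:ℝ) 1, HasDerivWithinAt u (u' r) (Icc 0 1) r) ∧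
      ContinuousOn u' (Icc 0 1) ∧
      (∀ r ∈ Ioo (0:ℝ) 1, HasDerivAt u' (u'' r) r) ∧
      u' 0 = 0 ∧ u' 1 = 0 ∧
      (∀ r ∈ Icc (0:ℝ) 1, 0 < u r) ∧
      MonotoneOn u (Icc 0 1) ∧
      (∃ r ∈ Icc (0:ℝ) 1, ∃ s ∈ Icc (0:ℝ) 1, u r ≠ u s) ∧
      (∀ r ∈ Ioo (0:ℝ) 1,
        -u'' r + (b r * r - ((N : ℝ) - 1) / r) * u' r + u r = a r * f (u r)) := by
  have hd : (0 : ℝ) ≤ N - 1 := sub_nonneg.2 (by exact_mod_cast one_le_two.trans hN)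
  have hf_small : ∃ ε > 0, ∀ x ∈ Icc 0 ε, a 1 * f x ≤ x :=
    exists_forall_mul_le_of_derivWithin_eq_zero
      (hf_diff.differentiableOn one_ne_zero 0 self_mem_Ici) hf0 hf'0 (a 1)
  obtain ⟨u, u', u'', hu, hu', hu'', h0, h1, hpos, hstrict, heq⟩ := stmt_1_general one_pos
    ha_diff.continuousOn ha_mono
    (left_lt_right_of_monotoneOn_Icc_of_exists_ne ha_mono ha_nonconst) hb_cont
    (fun r hr => (mul_nonpos_of_nonpos_of_nonneg (hb_nonpos r hr) (sq_nonneg r)).trans hd)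
    (hf_diff.locallyLipschitzOn (convex_Ici 0)) hf_mono hf0 hf_small
    (exists_lt_mul_of_lt_liminf_div ha0 hf_liminf)
  exact ⟨u, u', u'', hu, hu', hu'', h0, h1, hpos, hstrict.monotoneOn,
    ⟨0, left_mem_Icc.2 zero_le_one, 1, right_mem_Icc.2 zero_le_one,
      (hstrict (left_mem_Icc.2 zero_le_one) (right_mem_Icc.2 zero_le_one) zero_lt_one).ne⟩, heq⟩
end

section
/- Let N ≥ 2. Let f : [0,∞) → ℝ be continuously differentiable and nondecreasing with f(0) = 0, f'(0) = 0, and liminf_{s→+∞} f(s)/s > 1. Suppose λ₂ > 1 is a real number such that: (i) there exists a nonzero function v : [0,1] → ℝ, continuously differentiable on [0,1] and twice differentiable on (0,1), with v'(0) = v'(1) = 0 and −v''(r) − ((N−1)/r)·v'(r) + v(r) = λ₂·v(r) for all r ∈ (0,1); and (ii) no such nonzero function exists for any λ ∈ (1, λ₂) in place of λ₂. Suppose further there exists u₀ > 0 with f(u₀) = u₀ and f'(u₀) > λ₂. Then there exists a function u : [0,1] → ℝ, continuously differentiable on [0,1] and twice differentiable on (0,1), with u'(0) = u'(1) = 0,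 u(r) > 0 for all r ∈ [0,1], u nondecreasing, u nonconstant, and −u''(r) − ((N−1)/r)·u'(r) + u(r) = f(u(r)) for all r ∈ (0,1). -/
open Set Filter

/-- `lam` is a radial Neumann eigenvalue of `-Δ + 1` on the unit ball of `ℝ^N`:
there is a nonzero radial eigenfunction `v` with `v'(0) = v'(1) = 0` solving
`-v'' - ((N-1)/r) v' + v = lam v` on `(0,1)`. -/
def IsRadialEigenvalue (N : ℕ) (lam : ℝ) : Prop :=
  ∃ v v' v'' : ℝ → ℝ,
    (∀ r ∈ Set.Icc (0:ℝ) 1, HasDerivWithinAt v (v' r) (Set.Icc 0 1) r) ∧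
    ContinuousOn v' (Set.Icc 0 1) ∧
    (∀ r ∈ Set.Ioo (0:ℝ) 1, HasDerivAt v' (v'' r) r) ∧
    v' 0 = 0 ∧ v' 1 = 0 ∧
    (∃ r ∈ Set.Icc (0:ℝ) 1, v r ≠ 0) ∧
    ∀ r ∈ Set.Ioo (0:ℝ) 1,
      -v'' r - ((N : ℝ) - 1) / r * v' r + v r = lam * v r

open Topology

/-!
Write `q s = s - f s` and shoot: let `u` solve `u'' + ((N - 1) / r) u' = q u` with `u(0) = d` and
`u'(0) = 0`, where `d` runs through `(a, u₀)` and `a` is the last zero of `q` below `u₀`, so that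
`q > 0` on `(a, u₀)`. For `d` close to `a` the solution stays in `(a, u₀)`, hence increases, up to
`r = 1`. For `d` close to `u₀` it stays close to `u₀`, where `-q` is steeper than
`(λ₂ - 1)(s - u₀)`, and Picone's identity against the radial eigenfunction forces `u'` to vanish
before `r = 1`. By continuity some `d` puts the first zero of `u'` exactly at `r = 1`. Outside
`[a, M]`, for `M` an a priori bound of increasing solutions, `q` is replaced by constants, which
makes it globally Lipschitz.
-/

section RadialMean

/-- The weighted mean `∫₀¹ σⁿ g(rσ) dσ` of `g` over `[0, r]`. For `r ≠ 0` the quantity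
`r * radialMean n g r = r⁻ⁿ ∫₀ʳ sⁿ g(s) ds` is the solution of `p' + (n / r) p = g` that vanishes at
the origin; the rescaled integral also makes sense at `r = 0`. -/
noncomputable def radialMean (n : ℕ) (g : ℝ → ℝ) (r : ℝ) : ℝ :=
  ∫ σ in (0 : ℝ)..1, σ ^ n * g (r * σ)

variable {n : ℕ} {f g : ℝ → ℝ} {r B : ℝ}

lemma mul_mem_uIcc_zero {σ : ℝ} (hσ : σ ∈ Icc (0 : ℝ) 1) : r * σ ∈ uIcc 0 r := by
  rcases le_total 0 r with hr | hr
  · rw [uIcc_of_le hr]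
    exact ⟨mul_nonneg hr hσ.1, mul_le_of_le_one_right hr hσ.2⟩
  · rw [uIcc_of_ge hr]
    exact ⟨by nlinarith [hσ.2], mul_nonpos_of_nonpos_of_nonneg hr hσ.1⟩

lemma continuous_radialMean {X : Type*} [TopologicalSpace X] {g : X → ℝ → ℝ} {ρ : X → ℝ}
    (hg : Continuous (Function.uncurry g)) (hρ : Continuous ρ) :
    Continuous fun x => radialMean n (g x) (ρ x) :=
  intervalIntegral.continuous_parametric_intervalIntegral_of_continuous'
    (f := fun x σ => σ ^ n * g x (ρ x * σ)) (by fun_prop) 0 1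

lemma pow_succ_mul_radialMean (n : ℕ) (g : ℝ → ℝ) (r : ℝ) :
    r ^ (n + 1) * radialMean n g r = ∫ s in (0 : ℝ)..r, s ^ n * g s := by
  have hsubst := intervalIntegral.mul_integral_comp_mul_left (a := 0) (b := 1)
    (f := fun s => s ^ n * g s) r
  rw [mul_zero, mul_one] at hsubst
  rw [← hsubst, pow_succ', mul_assoc, radialMean, ← intervalIntegral.integral_const_mul]
  simp only [mul_pow, mul_assoc]

lemma hasDerivAt_pow_succ_mul_radialMean (hg : Continuous g) (r : ℝ) :
    HasDerivAt (fun r => r ^ (n + 1) * radialMean n g r) (r ^ n * g r) r := by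
  simp only [pow_succ_mul_radialMean]
  exact (Continuous.integral_hasStrictDerivAt (by fun_prop) 0 r).hasDerivAt

lemma hasDerivAt_radialMean (hg : Continuous g) (hr : r ≠ 0) :
    HasDerivAt (radialMean n g) ((g r - (n + 1) * radialMean n g r) / r) r := by
  have hpow : r ^ (n + 1) ≠ 0 := pow_ne_zero _ hr
  have hquot := (hasDerivAt_pow_succ_mul_radialMean (n := n) hg r).div
    (hasDerivAt_pow (n + 1) r) hpow
  refine (hquot.congr_of_eventuallyEq ?_).congr_deriv ?_
  · filter_upwards [isOpen_ne.mem_nhds hr] with s hs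
    rw [Pi.div_apply, mul_div_cancel_left₀ _ (pow_ne_zero _ hs)]
  · simp only [Nat.add_sub_cancel, Nat.cast_add, Nat.cast_one]
    field_simp
    ring

lemma hasDerivAt_mul_radialMean (hg : Continuous g) (hr : r ≠ 0) :
    HasDerivAt (fun r => r * radialMean n g r) (g r - n / r * (r * radialMean n g r)) r := by
  refine ((hasDerivAt_id r).mul (hasDerivAt_radialMean hg hr)).congr_deriv ?_
  simp only [id_eq]
  field_simp
  ring

lemma eq_mul_radialMean {R : ℝ} {p : ℝ → ℝ} (hg : Continuous g) (hpc : ContinuousOn p (Icc 0 R))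
    (hp0 : p 0 = 0) (hp : ∀ r ∈ Ioo 0 R, HasDerivAt p (g r - n / r * p r) r) (hr : r ∈ Icc 0 R) :
    p r = r * radialMean n g r := by
  rcases hr.1.eq_or_lt with rfl | hr0
  · simp [hp0]
  have hderiv : ∀ s ∈ Ioo 0 r, HasDerivAt (fun s => s ^ n * p s) (s ^ n * g s) s := by
    intro s hs
    have hs0 : s ≠ 0 := hs.1.ne'
    refine ((hasDerivAt_pow n s).mul (hp s ⟨hs.1, hs.2.trans_le hr.2⟩)).congr_deriv ?_
    rcases n with _ | n
    · simp
    · simp only [Nat.add_sub_cancel]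
      field_simp
      ring
  have hcont : ContinuousOn (fun s => s ^ n * p s) (Icc 0 r) :=
    (continuousOn_pow n).mul (hpc.mono (Icc_subset_Icc_right hr.2))
  have hint := intervalIntegral.integral_eq_sub_of_hasDerivAt_of_le hr.1 hcont hderiv
    (Continuous.intervalIntegrable (by fun_prop) 0 r)
  rw [← pow_succ_mul_radialMean, hp0, mul_zero, sub_zero, pow_succ, mul_assoc] at hint
  exact (mul_left_cancel₀ (pow_ne_zero n hr0.ne') hint).symm

lemma radialMean_const (c : ℝ) : radialMean n (fun _ => c) r = c / (n + 1) := by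
  simp [radialMean, div_eq_inv_mul]

lemma radialMean_zero_right (n : ℕ) (g : ℝ → ℝ) : radialMean n g 0 = g 0 / (n + 1) := by
  rw [← radialMean_const (r := 0)]
  simp only [radialMean, zero_mul]

lemma radialMean_const_mul (c : ℝ) : radialMean n (fun s => c * g s) r = c * radialMean n g r := by
  simp only [radialMean, mul_left_comm, intervalIntegral.integral_const_mul]

lemma radialMean_sub (hf : Continuous f) (hg : Continuous g) :
    radialMean n (fun s => f s - g s) r = radialMean n f r - radialMean n g r := by
  simp only [radialMean, mul_sub]
  exact intervalIntegral.integral_sub (Continuous.intervalIntegrable (by fun_prop) 0 1)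
    (Continuous.intervalIntegrable (by fun_prop) 0 1)

lemma radialMean_mono (hf : Continuous f) (hg : Continuous g)
    (hfg : ∀ s ∈ uIcc 0 r, f s ≤ g s) : radialMean n f r ≤ radialMean n g r :=
  intervalIntegral.integral_mono_on zero_le_one (Continuous.intervalIntegrable (by fun_prop) 0 1)
    (Continuous.intervalIntegrable (by fun_prop) 0 1) fun _ hσ =>
      mul_le_mul_of_nonneg_left (hfg _ (mul_mem_uIcc_zero hσ)) (pow_nonneg hσ.1 n)

lemma abs_radialMean_le_radialMean (hg : Continuous g) (hfg : ∀ s ∈ uIcc 0 r, |f s| ≤ g s) :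
    |radialMean n f r| ≤ radialMean n g r := by
  refine intervalIntegral.norm_integral_le_of_norm_le (μ := MeasureTheory.volume)
    (f := fun σ => σ ^ n * f (r * σ)) (g := fun σ => σ ^ n * g (r * σ)) zero_le_one
    (Eventually.of_forall fun σ hσ => ?_) (Continuous.intervalIntegrable (by fun_prop) 0 1)
  rw [norm_mul, Real.norm_of_nonneg (pow_nonneg hσ.1.le n)]
  exact mul_le_mul_of_nonneg_left (hfg _ (mul_mem_uIcc_zero (Ioc_subset_Icc_self hσ)))
    (pow_nonneg hσ.1.le n)

lemma radialMean_const_le (hB : 0 ≤ B) : radialMean n (fun _ => B) r ≤ B := by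
  rw [radialMean_const]
  exact div_le_self hB (by linarith [n.cast_nonneg (α := ℝ)])

lemma radialMean_le (hg : Continuous g) (hB : 0 ≤ B) (hgB : ∀ s ∈ uIcc 0 r, g s ≤ B) :
    radialMean n g r ≤ B :=
  (radialMean_mono hg continuous_const hgB).trans (radialMean_const_le hB)

lemma abs_radialMean_le (hf : ∀ s ∈ uIcc 0 r, |f s| ≤ B) : |radialMean n f r| ≤ B :=
  (abs_radialMean_le_radialMean continuous_const hf).trans
    (radialMean_const_le ((abs_nonneg _).trans (hf 0 left_mem_uIcc)))

lemma radialMean_nonneg (hg : ∀ s ∈ uIcc 0 r, 0 ≤ g s) : 0 ≤ radialMean n g r :=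
  intervalIntegral.integral_nonneg zero_le_one fun _ hσ =>
    mul_nonneg (pow_nonneg hσ.1 n) (hg _ (mul_mem_uIcc_zero hσ))

lemma radialMean_pos (hg : Continuous g) (hpos : ∀ s ∈ uIcc 0 r, 0 < g s) :
    0 < radialMean n g r :=
  intervalIntegral.intervalIntegral_pos_of_pos_on (Continuous.intervalIntegrable (by fun_prop) 0 1)
    (fun _ hσ => mul_pos (pow_pos hσ.1 n) (hpos _ (mul_mem_uIcc_zero (Ioo_subset_Icc_self hσ))))
    zero_lt_one

end RadialMean

section RadialSolution

/-- `u` is a radial solution of `Δu = h(u)` on `ℝⁿ⁺¹` that is regular at the origin. The equation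
`u'' + (n / r) u' = h(u)`, `u'(0) = 0` is encoded in its integrated form
`u'(r) = r⁻ⁿ ∫₀ʳ sⁿ h(u(s)) ds`. -/
def IsRadialSolution_s2 (n : ℕ) (h u : ℝ → ℝ) : Prop :=
  ∀ r, HasDerivAt u (r * radialMean n (h ∘ u) r) r

/-- The Picard operator whose fixed points are the radial solutions with initial value `d`. -/
noncomputable def radialPicard (n : ℕ) (h : ℝ → ℝ) (d : ℝ) (u : ℝ → ℝ) (r : ℝ) : ℝ :=
  d + r ^ 2 * radialMean 1 (radialMean n (h ∘ u)) r

variable {n : ℕ} {h u v : ℝ → ℝ} {L : NNReal} {r D d e : ℝ}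

lemma continuous_radialMean_comp (hh : Continuous h) (hu : Continuous u) :
    Continuous (radialMean n (h ∘ u)) :=
  continuous_radialMean (g := fun _ => h ∘ u) ((hh.comp hu).comp continuous_snd) continuous_id

lemma hasDerivAt_radialPicard (hh : Continuous h) (hu : Continuous u) (d r : ℝ) :
    HasDerivAt (radialPicard n h d u) (r * radialMean n (h ∘ u) r) r :=
  ((hasDerivAt_pow_succ_mul_radialMean (n := 1)
    (continuous_radialMean_comp hh hu) r).const_add d).congr_deriv (by rw [pow_one])

lemma continuous_radialPicard (hh : Continuous h) (hu : Continuous u) (d : ℝ) :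
    Continuous (radialPicard n h d u) :=
  continuous_iff_continuousAt.2 fun r => (hasDerivAt_radialPicard hh hu d r).continuousAt

@[simp]
lemma radialPicard_zero (n : ℕ) (h : ℝ → ℝ) (d : ℝ) (u : ℝ → ℝ) : radialPicard n h d u 0 = d := by
  simp [radialPicard]

lemma sq_mul_radialMean_exp_sq (c r : ℝ) :
    r ^ 2 * radialMean 1 (fun s => c * Real.exp (c * s ^ 2)) r =
      (Real.exp (c * r ^ 2) - 1) / 2 := by
  have hprim : ∀ s ∈ uIcc 0 r, HasDerivAt (fun s => Real.exp (c * s ^ 2) / 2)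
      (s ^ 1 * (c * Real.exp (c * s ^ 2))) s := fun s _ =>
    (((hasDerivAt_pow 2 s).const_mul c).exp.div_const 2).congr_deriv (by ring)
  rw [pow_succ_mul_radialMean, intervalIntegral.integral_eq_sub_of_hasDerivAt hprim
    (Continuous.intervalIntegrable (by fun_prop) 0 r)]
  simp only [ne_eq, OfNat.ofNat_ne_zero, not_false_eq_true, zero_pow, mul_zero, Real.exp_zero]
  ring

/- Bielecki's trick: the weight `exp (L s²)` makes the Picard operator contract by the factor
`1 / 2` on the whole line, whatever `L` is. -/
lemma abs_radialPicard_sub_le (hh : LipschitzWith L h) (hu : Continuous u) (hv : Continuous v)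
    (huv : ∀ s ∈ uIcc 0 r, |u s - v s| ≤ D * Real.exp (L * s ^ 2)) :
    |radialPicard n h d u r - radialPicard n h e v r| ≤
      |d - e| + D / 2 * Real.exp (L * r ^ 2) := by
  have hD : 0 ≤ D := by simpa using (abs_nonneg _).trans (huv 0 left_mem_uIcc)
  have hmean : ∀ s ∈ uIcc 0 r, |radialMean n (h ∘ u) s - radialMean n (h ∘ v) s| ≤
      D * (L * Real.exp (L * s ^ 2)) := by
    intro s hs
    rw [← radialMean_sub (hh.continuous.comp hu) (hh.continuous.comp hv)]
    refine abs_radialMean_le fun t ht => ?_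
    have hts : t ^ 2 ≤ s ^ 2 := sq_le_sq.2 (by simpa using abs_sub_left_of_mem_uIcc ht)
    calc |h (u t) - h (v t)| ≤ L * |u t - v t| := hh.dist_le_mul _ _
      _ ≤ L * (D * Real.exp (L * t ^ 2)) := by
        gcongr
        exact huv t (uIcc_subset_uIcc_left hs ht)
      _ ≤ L * (D * Real.exp (L * s ^ 2)) := by gcongr
      _ = D * (L * Real.exp (L * s ^ 2)) := by ring
  have hsub : radialPicard n h d u r - radialPicard n h e v r = (d - e) +
      r ^ 2 * radialMean 1 (fun s => radialMean n (h ∘ u) s - radialMean n (h ∘ v) s) r := by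
    rw [radialMean_sub (continuous_radialMean_comp hh.continuous hu)
      (continuous_radialMean_comp hh.continuous hv), radialPicard, radialPicard]
    ring
  have hexp : r ^ 2 * radialMean 1 (fun s => D * (L * Real.exp (L * s ^ 2))) r ≤
      D / 2 * Real.exp (L * r ^ 2) := by
    rw [radialMean_const_mul, mul_left_comm, sq_mul_radialMean_exp_sq]
    linarith
  calc |radialPicard n h d u r - radialPicard n h e v r|
      ≤ |d - e| + |r ^ 2 * radialMean 1 _ r| := hsub ▸ abs_add_le _ _
    _ ≤ |d - e| + r ^ 2 * radialMean 1 (fun s => D * (L * Real.exp (L * s ^ 2))) r := by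
      rw [abs_mul, abs_of_nonneg (sq_nonneg r)]
      gcongr
      exact abs_radialMean_le_radialMean (by fun_prop) hmean
    _ ≤ |d - e| + D / 2 * Real.exp (L * r ^ 2) := by gcongr

namespace IsRadialSolution_s2

lemma continuous (hu : IsRadialSolution_s2 n h u) : Continuous u :=
  continuous_iff_continuousAt.2 fun r => (hu r).continuousAt

lemma continuous_radialMean (hu : IsRadialSolution_s2 n h u) (hh : Continuous h) :
    Continuous (radialMean n (h ∘ u)) :=
  continuous_radialMean_comp hh hu.continuous

lemma const {c : ℝ} (hc : h c = 0) : IsRadialSolution_s2 n h fun _ => c := by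
  intro r
  have hzero : h ∘ (fun _ : ℝ => c) = fun _ => 0 := funext fun _ => hc
  rw [hzero, radialMean_const, zero_div, mul_zero]
  exact hasDerivAt_const r c

lemma radialPicard_eq (hu : IsRadialSolution_s2 n h u) (hh : Continuous h) :
    radialPicard n h (u 0) u = u := by
  have hderiv : ∀ r, HasDerivAt (radialPicard n h (u 0) u - u) 0 r := fun r =>
    ((hasDerivAt_radialPicard hh hu.continuous (u 0) r).sub (hu r)).congr_deriv (sub_self _)
  funext r
  have hconst := is_const_of_deriv_eq_zero (fun s => (hderiv s).differentiableAt)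
    (fun s => (hderiv s).deriv) r 0
  simpa [sub_eq_zero] using hconst

lemma abs_sub_le (hh : LipschitzWith L h) (hu : IsRadialSolution_s2 n h u)
    (hv : IsRadialSolution_s2 n h v) (r : ℝ) :
    |u r - v r| ≤ 2 * Real.exp (L * r ^ 2) * |u 0 - v 0| := by
  have huc := hu.continuous
  have hvc := hv.continuous
  obtain ⟨t, ht, hmax⟩ := isCompact_uIcc.exists_isMaxOn (nonempty_uIcc (a := (0 : ℝ)) (b := r))
    (f := fun s => |u s - v s| / Real.exp (L * s ^ 2)) (by fun_prop (disch := simp))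
  -- The contraction estimate at the maximum point reads `D ≤ |u 0 - v 0| + D / 2`.
  set D := |u t - v t| / Real.exp (L * t ^ 2)
  have hle : ∀ s ∈ uIcc 0 r, |u s - v s| ≤ D * Real.exp (L * s ^ 2) := fun s hs =>
    (div_le_iff₀ (Real.exp_pos _)).1 (hmax hs)
  have hcontr := abs_radialPicard_sub_le (n := n) (d := u 0) (e := v 0) hh huc hvc
    fun s hs => hle s (uIcc_subset_uIcc_left ht hs)
  rw [hu.radialPicard_eq hh.continuous, hv.radialPicard_eq hh.continuous,
    ← sub_le_iff_le_add] at hcontr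
  have hDle : D ≤ 2 * |u 0 - v 0| := by
    have hexp : 1 ≤ Real.exp (L * t ^ 2) := Real.one_le_exp (by positivity)
    have heq : D * Real.exp (L * t ^ 2) = |u t - v t| := div_mul_cancel₀ _ (Real.exp_ne_zero _)
    nlinarith [abs_nonneg (u 0 - v 0)]
  calc |u r - v r| ≤ D * Real.exp (L * r ^ 2) := hle r right_mem_uIcc
    _ ≤ 2 * |u 0 - v 0| * Real.exp (L * r ^ 2) := by gcongr
    _ = 2 * Real.exp (L * r ^ 2) * |u 0 - v 0| := by ring

end IsRadialSolution_s2

lemma abs_radialPicard_le (hh : LipschitzWith L h) (hL : 1 ≤ L) (hu : Continuous u)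
    (huD : ∀ s, |u s| ≤ D * Real.exp (L * s ^ 2)) (d r : ℝ) :
    |radialPicard n h d u r| ≤ (|d| + |h 0| + D / 2) * Real.exp (L * r ^ 2) := by
  have hL' : (1 : ℝ) ≤ L := hL
  have hsub : |radialPicard n h d u r - radialPicard n h d (fun _ => 0) r| ≤
      |d - d| + D / 2 * Real.exp (L * r ^ 2) :=
    abs_radialPicard_sub_le hh hu continuous_const fun s _ => by simpa using huD s
  have hbase : |radialPicard n h d (fun _ => 0) r| ≤ |d| + r ^ 2 * |h 0| := by
    refine (abs_add_le _ _).trans ?_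
    rw [abs_mul, abs_of_nonneg (sq_nonneg r)]
    exact add_le_add_right (mul_le_mul_of_nonneg_left
      (abs_radialMean_le fun s _ => abs_radialMean_le fun t _ => le_rfl) (sq_nonneg r)) _
  have hexp : L * r ^ 2 + 1 ≤ Real.exp (L * r ^ 2) := Real.add_one_le_exp _
  have hsq : r ^ 2 ≤ L * r ^ 2 := le_mul_of_one_le_left (sq_nonneg r) hL'
  rw [sub_self, abs_zero, zero_add] at hsub
  calc |radialPicard n h d u r|
      ≤ |radialPicard n h d u r - radialPicard n h d (fun _ => 0) r| +
        |radialPicard n h d (fun _ => 0) r| := by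
          simpa using abs_add_le (radialPicard n h d u r - radialPicard n h d (fun _ => 0) r)
            (radialPicard n h d (fun _ => 0) r)
    _ ≤ D / 2 * Real.exp (L * r ^ 2) + (|d| * 1 + r ^ 2 * |h 0|) := by
      rw [mul_one]
      exact add_le_add hsub hbase
    _ ≤ D / 2 * Real.exp (L * r ^ 2) +
        (|d| * Real.exp (L * r ^ 2) + Real.exp (L * r ^ 2) * |h 0|) := by
      gcongr <;> nlinarith [sq_nonneg r]
    _ = (|d| + |h 0| + D / 2) * Real.exp (L * r ^ 2) := by ring

lemma exists_isRadialSolution_s2 (n : ℕ) (hh : LipschitzWith L h) (d : ℝ) :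
    ∃ u, IsRadialSolution_s2 n h u ∧ u 0 = d := by
  wlog hL : 1 ≤ L generalizing L
  · exact this (hh.weaken (le_add_of_nonneg_left zero_le : L ≤ 1 + L)) le_self_add
  let weight : ℝ → ℝ := fun s => Real.exp (L * s ^ 2)
  have hweight : ∀ s, 0 < weight s := fun s => Real.exp_pos _
  let unweight : BoundedContinuousFunction ℝ ℝ → ℝ → ℝ := fun w s => w s * weight s
  have hcont : ∀ w, Continuous (unweight w) := fun w => by fun_prop
  have hbound : ∀ w s, |unweight w s| ≤ ‖w‖ * weight s := fun w s => by
    rw [abs_mul, abs_of_pos (hweight s)]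
    exact mul_le_mul_of_nonneg_right (w.norm_coe_le_norm s) (hweight s).le
  let T : BoundedContinuousFunction ℝ ℝ → BoundedContinuousFunction ℝ ℝ := fun w =>
    .ofNormedAddCommGroup (fun r => radialPicard n h d (unweight w) r / weight r)
      ((continuous_radialPicard hh.continuous (hcont w) d).div (by fun_prop)
        fun r => (hweight r).ne') (|d| + |h 0| + ‖w‖ / 2) fun r => by
        rw [norm_div, Real.norm_of_nonneg (hweight r).le, div_le_iff₀ (hweight r)]
        exact abs_radialPicard_le hh hL (hcont w) (hbound w) d r
  have hT : ContractingWith (1 / 2) T := by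
    refine ⟨by rw [← NNReal.coe_lt_coe]; norm_num, LipschitzWith.of_dist_le_mul fun w z => ?_⟩
    refine (BoundedContinuousFunction.dist_le (by positivity)).2 fun r => ?_
    have hdist : ∀ s ∈ uIcc 0 r, |unweight w s - unweight z s| ≤ dist w z * weight s := by
      intro s _
      rw [← sub_mul, abs_mul, abs_of_pos (hweight s)]
      exact mul_le_mul_of_nonneg_right (w.dist_coe_le_dist s) (hweight s).le
    have hcontr := abs_radialPicard_sub_le (n := n) (d := d) (e := d) hh (hcont w) (hcont z) hdist
    change |radialPicard n h d (unweight w) r / weight r -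
      radialPicard n h d (unweight z) r / weight r| ≤ _
    rw [← sub_div, abs_div, abs_of_pos (hweight r), div_le_iff₀ (hweight r)]
    simpa [div_eq_inv_mul] using hcontr
  have hfix : radialPicard n h d (unweight hT.fixedPoint) = unweight hT.fixedPoint := by
    funext r
    have := congrArg (fun w => w r) hT.fixedPoint_isFixedPt
    exact (div_eq_iff (hweight r).ne').1 this
  refine ⟨unweight hT.fixedPoint, fun r => ?_, ?_⟩
  · have hderiv := hasDerivAt_radialPicard (n := n) hh.continuous (hcont hT.fixedPoint) d r
    rwa [hfix] at hderiv
  · rw [← hfix, radialPicard_zero]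

end RadialSolution

section Comparison

namespace IsRadialSolution_s2

variable {n : ℕ} {h u : ℝ → ℝ} {L : NNReal} {r R B a c : ℝ}

lemma le_add_sq_mul (hu : IsRadialSolution_s2 n h u) (hh : Continuous h) (hB : 0 ≤ B)
    (hhB : ∀ x, h x ≤ B) (r : ℝ) : u r ≤ u 0 + r ^ 2 * B := by
  have hmean : radialMean 1 (radialMean n (h ∘ u)) r ≤ B :=
    radialMean_le (hu.continuous_radialMean hh) hB fun s _ =>
      radialMean_le (hh.comp hu.continuous) hB fun t _ => hhB (u t)
  calc u r = u 0 + r ^ 2 * radialMean 1 (radialMean n (h ∘ u)) r :=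
        (congrFun (hu.radialPicard_eq hh) r).symm
    _ ≤ u 0 + r ^ 2 * B := by gcongr

lemma continuous_uncurry {U : ℝ → ℝ → ℝ} (hh : LipschitzWith L h)
    (hU : ∀ d, IsRadialSolution_s2 n h (U d)) (hU0 : ∀ d, U d 0 = d) :
    Continuous (Function.uncurry U) := by
  refine continuous_iff_continuousAt.2 fun ⟨d₀, r₀⟩ => ?_
  rw [ContinuousAt, tendsto_iff_dist_tendsto_zero]
  have hbound : ∀ x : ℝ × ℝ, dist (U x.1 x.2) (U d₀ r₀) ≤
      2 * Real.exp (L * x.2 ^ 2) * |x.1 - d₀| + dist (U d₀ x.2) (U d₀ r₀) := fun x =>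
    (dist_triangle _ (U d₀ x.2) _).trans <| add_le_add_left
      (by simpa only [hU0, Real.dist_eq] using (hU x.1).abs_sub_le hh (hU d₀) x.2) _
  have hlim : Continuous fun x : ℝ × ℝ =>
      2 * Real.exp (L * x.2 ^ 2) * |x.1 - d₀| + dist (U d₀ x.2) (U d₀ r₀) := by
    have := (hU d₀).continuous
    fun_prop
  exact squeeze_zero (fun _ => dist_nonneg) hbound (by simpa using hlim.tendsto (d₀, r₀))

lemma eq_of_radialMean_eq_zero (hh : LipschitzWith L h) (hu : IsRadialSolution_s2 n h u)
    (hr : 0 < r) (hmean : radialMean n (h ∘ u) r = 0) (hur : h (u r) = 0) : u 0 = u r := by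
  have heq : ∀ e ∈ Ioo 0 r, u e = u r := by
    intro e he
    have hlip : ∀ t ∈ Ioc e r, LipschitzOnWith (max 1 (L + ‖n / e‖₊))
        (fun x : ℝ × ℝ => (x.2, h x.1 - n / t * x.2)) univ := by
      intro t ht
      have hcoeff : ‖(n / t : ℝ)‖₊ ≤ ‖n / e‖₊ := by
        rw [← NNReal.coe_le_coe, coe_nnnorm, coe_nnnorm, norm_div, norm_div,
          Real.norm_of_nonneg he.1.le, Real.norm_of_nonneg (he.1.trans ht.1).le]
        exact div_le_div_of_nonneg_left (norm_nonneg _) he.1 ht.1.le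
      have hsnd := (lipschitzWith_smul (n / t : ℝ)).comp (LipschitzWith.prod_snd (α := ℝ) (β := ℝ))
      refine ((LipschitzWith.prod_snd.prodMk
        ((hh.comp LipschitzWith.prod_fst).sub hsnd)).weaken ?_).lipschitzOnWith
      rw [mul_one, mul_one]
      gcongr
    have hderiv : ∀ t ∈ Icc e r, HasDerivAt (fun t => (u t, t * radialMean n (h ∘ u) t))
        (t * radialMean n (h ∘ u) t, h (u t) - n / t * (t * radialMean n (h ∘ u) t)) t :=
      fun t ht => (hu t).prodMk
        (hasDerivAt_mul_radialMean (hh.continuous.comp hu.continuous) (he.1.trans_le ht.1).ne')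
    have hunique := ODE_solution_unique_of_mem_Icc_left hlip (g := fun _ => (u r, (0 : ℝ)))
      (fun t ht => (hderiv t ht).continuousAt.continuousWithinAt)
      (fun t ht => (hderiv t (Ioc_subset_Icc_self ht)).hasDerivWithinAt) (fun _ _ => mem_univ _)
      continuousOn_const (fun t _ => (hasDerivWithinAt_const _ _ _).congr_deriv
        (Prod.ext rfl (by simp [hur])))
      (fun _ _ => mem_univ _) (by simp only [hmean, mul_zero])
    exact congrArg Prod.fst (hunique ⟨le_rfl, he.2.le⟩)
  have hlim : Tendsto u (𝓝[>] 0) (𝓝 (u 0)) := hu.continuous.continuousWithinAt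
  refine tendsto_nhds_unique hlim (tendsto_const_nhds.congr' ?_)
  filter_upwards [Ioo_mem_nhdsGT hr] with e he using (heq e he).symm

lemma radialMean_pos_of_nonneg (hh : LipschitzWith L h) (hu : IsRadialSolution_s2 n h u)
    (hu0 : 0 < h (u 0)) (hmean : ∀ s ∈ Icc 0 R, 0 ≤ radialMean n (h ∘ u) s) (hr : r ∈ Ico 0 R) :
    0 < radialMean n (h ∘ u) r := by
  refine (hmean r (Ico_subset_Icc_self hr)).lt_of_ne' fun hzero => ?_
  rcases hr.1.eq_or_lt with rfl | hr0
  · rw [radialMean_zero_right, div_eq_zero_iff] at hzero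
    exact hzero.elim hu0.ne' (by positivity)
  have hmin : IsLocalMin (fun s => s ^ (n + 1) * radialMean n (h ∘ u) s) r := by
    filter_upwards [Ioo_mem_nhds hr0 hr.2] with s hs
    rw [hzero, mul_zero]
    exact mul_nonneg (pow_nonneg hs.1.le _) (hmean s (Ioo_subset_Icc_self hs))
  have hcrit : h (u r) = 0 := (mul_eq_zero.1 (hmin.hasDerivAt_eq_zero
    (hasDerivAt_pow_succ_mul_radialMean (hh.continuous.comp hu.continuous) r))).resolve_left
    (pow_ne_zero n hr0.ne')
  rw [hu.eq_of_radialMean_eq_zero hh hr0 hzero hcrit, hcrit] at hu0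
  exact hu0.false

lemma monotoneOn_s2 (hu : IsRadialSolution_s2 n h u)
    (hmean : ∀ s ∈ Ioo 0 R, 0 ≤ radialMean n (h ∘ u) s) : MonotoneOn u (Icc 0 R) := by
  refine monotoneOn_of_hasDerivWithinAt_nonneg (f' := fun r => r * radialMean n (h ∘ u) r)
    (convex_Icc 0 R) hu.continuous.continuousOn (fun r _ => (hu r).hasDerivWithinAt) ?_
  rw [interior_Icc]
  exact fun r hr => mul_nonneg hr.1.le (hmean r hr)

lemma strictMonoOn_s2 (hu : IsRadialSolution_s2 n h u)
    (hmean : ∀ s ∈ Ioo 0 R, 0 < radialMean n (h ∘ u) s) : StrictMonoOn u (Icc 0 R) := by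
  refine strictMonoOn_of_hasDerivWithinAt_pos (f' := fun r => r * radialMean n (h ∘ u) r)
    (convex_Icc 0 R) hu.continuous.continuousOn (fun r _ => (hu r).hasDerivWithinAt) ?_
  rw [interior_Icc]
  exact fun r hr => mul_pos hr.1 (hmean r hr)

lemma radialMean_pos_of_lt (hu : IsRadialSolution_s2 n h u) (hh : Continuous h)
    (hle : ∀ x ≤ a, h x = 0) (hpos : ∀ x ∈ Ioo a c, 0 < h x) (hu0 : a < u 0)
    (huc : ∀ s ∈ Icc 0 R, u s < c) (hr : r ∈ Icc 0 R) : 0 < radialMean n (h ∘ u) r := by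
  have hsub : ∀ {s}, s ∈ Icc 0 R → uIcc 0 s ⊆ Icc 0 R := fun hs =>
    uIcc_subset_Icc ⟨le_rfl, hs.1.trans hs.2⟩ hs
  have hnonneg : ∀ s ∈ Icc 0 R, 0 ≤ h (u s) := fun s hs =>
    (le_or_gt (u s) a).elim (fun hsa => (hle _ hsa).ge) fun hsa => (hpos _ ⟨hsa, huc s hs⟩).le
  have hmono : MonotoneOn u (Icc 0 R) := hu.monotoneOn_s2 fun s hs =>
    radialMean_nonneg fun t ht => hnonneg t (hsub (Ioo_subset_Icc_self hs) ht)
  refine radialMean_pos (hh.comp hu.continuous) fun s hs => hpos _ ⟨hu0.trans_le ?_, ?_⟩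
  · exact hmono ⟨le_rfl, hr.1.trans hr.2⟩ (hsub hr hs) (hsub hr hs).1
  · exact huc s (hsub hr hs)

end IsRadialSolution_s2

end Comparison

section SturmPicone

lemma hasDerivAt_eq_zero_of_nonneg_of_le {F F' : ℝ → ℝ} {a b x : ℝ}
    (hF : ContinuousOn F (Icc a b)) (hF' : ∀ y ∈ Ioo a b, HasDerivAt F (F' y) y)
    (hnonneg : ∀ y ∈ Ioo a b, 0 ≤ F' y) (hba : F b ≤ F a) (hx : x ∈ Ioo a b) : F' x = 0 := by
  have hmono : MonotoneOn F (Icc a b) := by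
    refine monotoneOn_of_hasDerivWithinAt_nonneg (f' := F') (convex_Icc a b) hF ?_
      (by rwa [interior_Icc])
    rw [interior_Icc]
    exact fun y hy => (hF' y hy).hasDerivWithinAt
  have hconst : F =ᶠ[𝓝 x] fun _ => F a := by
    filter_upwards [Ioo_mem_nhds hx.1 hx.2] with y hy
    have hy' := Ioo_subset_Icc_self hy
    have hab := hy'.1.trans hy'.2
    exact le_antisymm ((hmono hy' (right_mem_Icc.2 hab) hy'.2).trans hba)
      (hmono (left_mem_Icc.2 hab) hy' hy'.1)
  exact (hF' x hx).unique ((hasDerivAt_const x (F a)).congr_of_eventuallyEq hconst)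

/-- `v` is a radial Neumann eigenfunction of `-Δ` on the ball of radius `R` in `ℝⁿ⁺¹`, with
eigenvalue `k`. The equation `-v'' - (n / r) v' = k v` is encoded in its integrated form, as in
`IsRadialSolution`; `v` is regarded as a continuous function on the whole line, on which only the
values in `[0, R]` matter. -/
structure IsRadialNeumannEigenfunction (n : ℕ) (k R : ℝ) (v : ℝ → ℝ) : Prop where
  continuous : Continuous v
  hasDerivAt : ∀ r ∈ Ioo 0 R, HasDerivAt v (-(k * (r * radialMean n v r))) r
  radialMean_eq_zero : radialMean n v R = 0
  exists_ne_zero : ∃ r ∈ Ioo 0 R, v r ≠ 0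

variable {n : ℕ} {h u v w y : ℝ → ℝ} {k k' r R c : ℝ}

/- The differentiated quantity is Picone's `p (p y / z - v)` (times `-rⁿ / k`) for the fluxes
`p = v'` and `z = y'`. -/
lemma hasDerivAt_picone (hv : Continuous v) (hw : Continuous w) (hr : r ≠ 0)
    (hw0 : radialMean n w r ≠ 0) (hvr : HasDerivAt v (-(k * (r * radialMean n v r))) r)
    (hyr : HasDerivAt y (r * radialMean n w r) r) :
    HasDerivAt (fun r => r ^ (n + 1) * radialMean n v r *
        (k * (radialMean n v r * y r / radialMean n w r) + v r))
      (r ^ n * (v r ^ 2 + 2 * k * v r * (radialMean n v r * y r / radialMean n w r) -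
        k * w r * y r * (radialMean n v r / radialMean n w r) ^ 2)) r := by
  refine ((hasDerivAt_pow_succ_mul_radialMean hv r).mul (((((hasDerivAt_radialMean hv hr).mul
    hyr).div (hasDerivAt_radialMean hw hr) hw0).const_mul k).add hvr)).congr_deriv ?_
  simp only [Pi.mul_apply, Pi.div_apply, Pi.add_apply]
  field_simp
  ring

lemma picone_le {w y : ℝ} (v G g : ℝ) (hk : 0 ≤ k) (hwy : k' * y ^ 2 ≤ -w * y) :
    (v + k * (G * y / g)) ^ 2 + k * (k' - k) * (G * y / g) ^ 2 ≤
      v ^ 2 + 2 * k * v * (G * y / g) - k * w * y * (G / g) ^ 2 := by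
  have hsq : (G * y / g) ^ 2 = y ^ 2 * (G / g) ^ 2 := by ring
  have hscaled := mul_le_mul_of_nonneg_left
    (mul_le_mul_of_nonneg_right hwy (sq_nonneg (G / g))) hk
  rw [mul_assoc k', ← hsq] at hscaled
  linarith

lemma IsRadialNeumannEigenfunction.exists_radialMean_nonpos
    (hv : IsRadialNeumannEigenfunction n k R v) (hk : 0 < k) (hkk' : k < k') (hh : Continuous h)
    (hu : IsRadialSolution_s2 n h u)
    (hcmp : ∀ r ∈ Icc 0 R, k' * (u r - c) ^ 2 ≤ -h (u r) * (u r - c)) :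
    ∃ r ∈ Icc 0 R, radialMean n (h ∘ u) r ≤ 0 := by
  by_contra! hpos
  have hvc := hv.continuous
  have huc := hu.continuous
  set G := radialMean n v
  set g := radialMean n (h ∘ u)
  set Y : ℝ → ℝ := fun r => G r * (u r - c) / g r
  have hGc : Continuous G :=
    continuous_radialMean (g := fun _ => v) (hvc.comp continuous_snd) continuous_id
  have hgc : Continuous g := hu.continuous_radialMean hh
  have hW : ContinuousOn (fun r => r ^ (n + 1) * G r * (k * Y r + v r)) (Icc 0 R) := by
    have hY : ContinuousOn Y (Icc 0 R) :=
      ContinuousOn.div (by fun_prop) (by fun_prop) fun r hr => (hpos r hr).ne'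
    fun_prop
  have hW' := fun r (hr : r ∈ Ioo 0 R) => hasDerivAt_picone hvc (hh.comp huc) hr.1.ne'
    (hpos r (Ioo_subset_Icc_self hr)).ne' (hv.hasDerivAt r hr) ((hu r).sub_const c)
  have hlower := fun r (hr : r ∈ Ioo 0 R) =>
    picone_le (v r) (G r) (g r) hk.le (hcmp r (Ioo_subset_Icc_self hr))
  have hcoef : 0 < k * (k' - k) := mul_pos hk (sub_pos.2 hkk')
  obtain ⟨r, hr, hvr⟩ := hv.exists_ne_zero
  have hzero := hasDerivAt_eq_zero_of_nonneg_of_le hW hW' (fun s hs =>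
    mul_nonneg (pow_nonneg hs.1.le n) (le_trans
      (add_nonneg (sq_nonneg _) (mul_nonneg hcoef.le (sq_nonneg _))) (hlower s hs)))
    (by simp [G, hv.radialMean_eq_zero]) hr
  have hsum : (v r + k * Y r) ^ 2 + k * (k' - k) * Y r ^ 2 ≤ 0 :=
    (hlower r hr).trans_eq ((mul_eq_zero.1 hzero).resolve_left (pow_ne_zero n hr.1.ne'))
  have hYr : Y r = 0 := pow_eq_zero_iff two_ne_zero |>.1 <| le_antisymm
    (nonpos_of_mul_nonpos_right (by linarith [sq_nonneg (v r + k * Y r)]) hcoef) (sq_nonneg _)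
  refine hvr (pow_eq_zero_iff two_ne_zero |>.1 (le_antisymm ?_ (sq_nonneg (v r))))
  simpa [hYr] using hsum

end SturmPicone

section Shooting

lemma exists_forall_nonneg_and_exists_eq_zero {X Y : Type*} [TopologicalSpace X]
    [TopologicalSpace Y] {K : Set Y} {s : Set X} {G : X → Y → ℝ} {x₁ x₂ : X} (hK : IsCompact K)
    (hs : IsPreconnected s) (hG : Continuous (Function.uncurry G)) (hx₁ : x₁ ∈ s) (hx₂ : x₂ ∈ s)
    (hpos : ∀ y ∈ K, 0 < G x₁ y) (hnonpos : ∃ y ∈ K, G x₂ y ≤ 0) :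
    ∃ x ∈ s, (∀ y ∈ K, 0 ≤ G x y) ∧ ∃ y ∈ K, G x y = 0 := by
  have himage : ∀ x, IsCompact (G x '' K) := fun x =>
    hK.image (hG.comp (Continuous.prodMk_right x))
  have hle : ∀ x, ∀ y ∈ K, sInf (G x '' K) ≤ G x y := fun x y hy =>
    csInf_le (himage x).bddBelow (mem_image_of_mem _ hy)
  obtain ⟨y₂, hy₂, hGy₂⟩ := hnonpos
  have hmem : ∀ x, sInf (G x '' K) ∈ G x '' K := fun x =>
    (himage x).sInf_mem (Nonempty.image _ ⟨y₂, hy₂⟩)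
  have hpos₁ : 0 ≤ sInf (G x₁ '' K) := by
    obtain ⟨y, hy, hGy⟩ := hmem x₁
    exact hGy ▸ (hpos y hy).le
  obtain ⟨x, hx, hzero⟩ := hs.intermediate_value hx₂ hx₁ (hK.continuous_sInf hG).continuousOn
    ⟨(hle x₂ y₂ hy₂).trans hGy₂, hpos₁⟩
  exact ⟨x, hx, fun y hy => hzero.symm.le.trans (hle x y hy), hzero ▸ hmem x⟩

/-- `u` is a radial solution of `Δu = h(u)` on the ball of radius `R` in `ℝⁿ⁺¹` that satisfies the
Neumann condition `u'(R) = 0` and is radially increasing, with no critical point inside the ball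
other than the center. Both are expressed through `u'(r) = r * radialMean n (h ∘ u) r`. -/
structure IsIncreasingNeumannSolution (n : ℕ) (R : ℝ) (h u : ℝ → ℝ) : Prop where
  isRadialSolution : IsRadialSolution_s2 n h u
  radialMean_pos : ∀ r ∈ Ico 0 R, 0 < radialMean n (h ∘ u) r
  radialMean_eq_zero : radialMean n (h ∘ u) R = 0

variable {n : ℕ} {h u v : ℝ → ℝ} {U : ℝ → ℝ → ℝ} {L : NNReal} {a c d k k' R : ℝ}

lemma IsRadialSolution_s2.eventually_forall_mem_Icc (hh : LipschitzWith L h)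
    (hU : ∀ d, IsRadialSolution_s2 n h (U d)) (hU0 : ∀ d, U d 0 = d) (hd : h d = 0)
    {P : ℝ → Prop} (hP : ∀ᶠ x in 𝓝 d, P x) (R : ℝ) :
    ∀ᶠ e in 𝓝 d, ∀ r ∈ Icc 0 R, P (U e r) := by
  have hUd : ∀ r, U d r = d := fun r => sub_eq_zero.1 <| abs_nonpos_iff.1 <| by
    simpa [hU0] using (hU d).abs_sub_le hh (.const hd) r
  refine isCompact_Icc.eventually_forall_of_forall_eventually fun r _ => ?_
  have hlim := (continuous_uncurry hh hU hU0).tendsto (d, r)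
  rw [Function.uncurry_apply_pair, hUd] at hlim
  exact hlim.eventually hP

theorem IsRadialNeumannEigenfunction.exists_isIncreasingNeumannSolution
    (hv : IsRadialNeumannEigenfunction n k R v) (hk : 0 < k) (hkk' : k < k')
    (hh : LipschitzWith L h) (hac : a < c) (hle : ∀ x ≤ a, h x = 0)
    (hpos : ∀ x ∈ Ioo a c, 0 < h x) (hc : h c = 0)
    (hcmp : ∀ᶠ x in 𝓝 c, k' * (x - c) ^ 2 ≤ -h x * (x - c)) :
    ∃ u, IsIncreasingNeumannSolution n R h u ∧ u 0 ∈ Ioo a c := by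
  choose U hU hU0 using exists_isRadialSolution_s2 n hh
  have hcont := IsRadialSolution_s2.continuous_uncurry hh hU hU0
  have hmean : Continuous (Function.uncurry fun d => radialMean n (h ∘ U d)) :=
    continuous_radialMean (g := fun x : ℝ × ℝ => h ∘ U x.1) (hh.continuous.comp
      (hcont.comp (continuous_fst.fst.prodMk continuous_snd))) continuous_snd
  obtain ⟨d₁, hd₁, hltc⟩ := ((IsRadialSolution_s2.eventually_forall_mem_Icc hh hU hU0
    (hle a le_rfl) (gt_mem_nhds hac) R).filter_mono nhdsWithin_le_nhds |>.and
      (Ioo_mem_nhdsGT hac)).exists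
  obtain ⟨d₂, hd₂, hnear⟩ := ((IsRadialSolution_s2.eventually_forall_mem_Icc hh hU hU0
    hc hcmp R).filter_mono nhdsWithin_le_nhds |>.and (Ioo_mem_nhdsLT hac)).exists
  obtain ⟨d, hd, hnonneg, r, hr, hzero⟩ := exists_forall_nonneg_and_exists_eq_zero isCompact_Icc
    isPreconnected_Ioo hmean hltc hnear
    (fun r hr =>
      (hU d₁).radialMean_pos_of_lt hh.continuous hle hpos ((hU0 d₁).symm ▸ hltc.1) hd₁ hr)
    (hv.exists_radialMean_nonpos hk hkk' hh.continuous (hU d₂) hd₂)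
  have hmean_pos : ∀ s ∈ Ico 0 R, 0 < radialMean n (h ∘ U d) s := fun s hs =>
    (hU d).radialMean_pos_of_nonneg hh ((hU0 d).symm ▸ hpos d hd) hnonneg hs
  have hrR : r = R := hr.2.eq_of_not_lt fun hlt => (hmean_pos r ⟨hr.1, hlt⟩).ne' hzero
  exact ⟨U d, ⟨hU d, hmean_pos, hrR ▸ hzero⟩, (hU0 d).symm ▸ hd⟩

end Shooting

section Truncation

variable {n : ℕ} {h q u v : ℝ → ℝ} {a b c k M R q' : ℝ}

namespace IsIncreasingNeumannSolution

lemma radialMean_nonneg (hu : IsIncreasingNeumannSolution n R h u) {r : ℝ} (hr : r ∈ Icc 0 R) :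
    0 ≤ radialMean n (h ∘ u) r :=
  hr.2.lt_or_eq.elim (fun hlt => (hu.radialMean_pos r ⟨hr.1, hlt⟩).le)
    fun heq => heq ▸ hu.radialMean_eq_zero.ge

lemma monotoneOn_s2 (hu : IsIncreasingNeumannSolution n R h u) : MonotoneOn u (Icc 0 R) :=
  hu.isRadialSolution.monotoneOn_s2 fun _ hr => hu.radialMean_nonneg (Ioo_subset_Icc_self hr)

lemma strictMonoOn_s2 (hu : IsIncreasingNeumannSolution n R h u) : StrictMonoOn u (Icc 0 R) :=
  hu.isRadialSolution.strictMonoOn_s2 fun r hr => hu.radialMean_pos r (Ioo_subset_Ico_self hr)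

/- Where `u ≥ M` the flux `rⁿ u'` is nondecreasing, so it could not return to `0` at `r = R`. -/
lemma le_of_nonneg (hu : IsIncreasingNeumannSolution n R h u) (hh : Continuous h) (hR : 0 ≤ R)
    (hM : ∀ x, M ≤ x → 0 ≤ h x) (hu0 : u 0 < M) : u R ≤ M := by
  by_contra! huR
  have huc := hu.isRadialSolution.continuous
  obtain ⟨r, hr, hur⟩ := intermediate_value_Ioo hR huc.continuousOn ⟨hu0, huR⟩
  have hflux : MonotoneOn (fun s => s ^ (n + 1) * radialMean n (h ∘ u) s) (Icc r R) := by
    have hderiv := hasDerivAt_pow_succ_mul_radialMean (n := n) (hh.comp huc)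
    refine monotoneOn_of_hasDerivWithinAt_nonneg (convex_Icc r R)
      (fun s _ => (hderiv s).continuousAt.continuousWithinAt)
      (fun s _ => (hderiv s).hasDerivWithinAt) fun s hs => ?_
    have hs' : s ∈ Icc r R := interior_subset hs
    exact mul_nonneg (pow_nonneg (hr.1.le.trans hs'.1) n) (hM _ (hur ▸ hu.monotoneOn_s2
      (Ioo_subset_Icc_self hr) (Icc_subset_Icc_left hr.1.le hs') hs'.1))
  have hle : r ^ (n + 1) * radialMean n (h ∘ u) r ≤ R ^ (n + 1) * radialMean n (h ∘ u) R :=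
    hflux ⟨le_rfl, hr.2.le⟩ ⟨hr.2.le, le_rfl⟩ hr.2.le
  rw [hu.radialMean_eq_zero, mul_zero] at hle
  exact hle.not_gt (mul_pos (pow_pos hr.1 _) (hu.radialMean_pos r (Ioo_subset_Ico_self hr)))

end IsIncreasingNeumannSolution

lemma exists_forall_isIncreasingNeumannSolution_le (n : ℕ) (hq : ContinuousOn q (Ici a))
    (hac : a < c) (hR : 0 ≤ R) :
    ∃ (M : ℝ) (haM : a ≤ M), c < M ∧ ∀ u,
      IsIncreasingNeumannSolution n R (IccExtend haM ((Icc a M).domRestrict q)) u →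
        u 0 < c → u R ≤ M := by
  have hcont : ∀ {M : ℝ} (haM : a ≤ M), Continuous (IccExtend haM ((Icc a M).domRestrict q)) :=
    fun haM => (hq.mono Icc_subset_Ici_self).domRestrict.Icc_extend'
  by_cases hnonneg : ∃ M, c < M ∧ 0 ≤ q M
  · obtain ⟨M, hcM, hqM⟩ := hnonneg
    refine ⟨M, (hac.trans hcM).le, hcM, fun u hu hu0 =>
      hu.le_of_nonneg (hcont _) hR (fun x hx => ?_) (hu0.trans hcM)⟩
    rwa [IccExtend_of_right_le _ _ hx]
  -- Otherwise `q < 0` beyond `c`, so the truncations are bounded above uniformly in `M`.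
  push Not at hnonneg
  obtain ⟨B, hB⟩ :=
    isCompact_Icc.bddAbove_image (hq.mono (Icc_subset_Ici_self : Icc a c ⊆ Ici a))
  have hqB : ∀ x ∈ Ici a, q x ≤ max B 0 := fun x hx => (le_or_gt x c).elim
    (fun hxc => (hB (mem_image_of_mem q ⟨hx, hxc⟩)).trans (le_max_left _ _))
    fun hcx => (hnonneg x hcx).le.trans (le_max_right _ _)
  have hcM : c < c + R ^ 2 * max B 0 + 1 := by
    have : 0 ≤ R ^ 2 * max B 0 := by positivity
    linarith
  refine ⟨_, (hac.trans hcM).le, hcM, fun u hu hu0 => ?_⟩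
  have hle := hu.isRadialSolution.le_add_sq_mul (hcont _) (le_max_right B 0)
    (fun x => hqB _ (projIcc a _ _ x).2.1) R
  linarith

lemma eventually_mul_sq_le (hq : HasDerivAt q q' c) (hqc : q c = 0) (hk : q' < -k) :
    ∀ᶠ x in 𝓝 c, k * (x - c) ^ 2 ≤ -q x * (x - c) := by
  have hslope := (hasDerivAt_iff_tendsto_slope.1 hq).eventually (gt_mem_nhds hk)
  rw [eventually_nhdsWithin_iff] at hslope
  filter_upwards [hslope] with x hx
  rcases eq_or_ne x c with rfl | hne
  · simp
  have hxc : x - c ≠ 0 := sub_ne_zero.2 hne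
  have hlt : q x / (x - c) < -k := by simpa [slope_def_field, hqc] using hx hne
  calc k * (x - c) ^ 2 ≤ -(q x / (x - c)) * (x - c) ^ 2 := by
        gcongr
        linarith
    _ = -q x * (x - c) := by field_simp

lemma exists_last_zero (hq : ContinuousOn q (Icc b c)) (hbc : b < c) (hqb : q b ≤ 0)
    (hpos : ∀ᶠ x in 𝓝[<] c, 0 < q x) : ∃ a ∈ Ico b c, q a = 0 ∧ ∀ x ∈ Ioo a c, 0 < q x := by
  obtain ⟨e, he, hepos⟩ := (mem_nhdsLT_iff_exists_mem_Ico_Ioo_subset hbc).1 hpos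
  obtain ⟨a, ⟨ha, hqa⟩, hmax⟩ : ∃ a, IsGreatest (Icc b e ∩ q ⁻¹' Iic 0) a := by
    have hqe : ContinuousOn q (Icc b e) := hq.mono (Icc_subset_Icc_right he.2.le)
    exact (isCompact_Icc.of_isClosed_subset (hqe.preimage_isClosed_of_isClosed isClosed_Icc
      isClosed_Iic) inter_subset_left).exists_isGreatest ⟨b, ⟨le_rfl, he.1⟩, hqb⟩
  have hac : a < c := ha.2.trans_lt he.2
  have hapos : ∀ x ∈ Ioo a c, 0 < q x := fun x hx => (le_or_gt x e).elim
    (fun hxe => lt_of_not_ge fun hqx => (hmax ⟨⟨ha.1.trans hx.1.le, hxe⟩, hqx⟩).not_gt hx.1)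
    fun hex => hepos ⟨hex, hx.2⟩
  refine ⟨a, ⟨ha.1, hac⟩, le_antisymm hqa ?_, hapos⟩
  have hlim : Tendsto q (𝓝[Ioo a c] a) (𝓝 (q a)) :=
    (hq a ⟨ha.1, hac.le⟩).mono fun x hx => ⟨ha.1.trans hx.1.le, hx.2.le⟩
  rw [nhdsWithin_Ioo_eq_nhdsGT hac] at hlim
  exact ge_of_tendsto hlim (by filter_upwards [Ioo_mem_nhdsGT hac] with x hx using (hapos x hx).le)

theorem IsRadialNeumannEigenfunction.exists_isIncreasingNeumannSolution_of_contDiffOn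
    (hv : IsRadialNeumannEigenfunction n k R v) (hk : 0 < k) (hq : ContDiffOn ℝ 1 q (Ici b))
    (hbc : b < c) (hqb : q b ≤ 0) (hqc : q c = 0) (hq' : HasDerivAt q q' c) (hkq : q' < -k) :
    ∃ h u, Continuous h ∧ IsIncreasingNeumannSolution n R h u ∧
      ∀ r ∈ Icc 0 R, b < u r ∧ h (u r) = q (u r) := by
  obtain ⟨k', hkk', hk'q⟩ := exists_between (lt_neg_of_lt_neg hkq)
  have hcmp := eventually_mul_sq_le hq' hqc (lt_neg_of_lt_neg hk'q)
  have hleft : ∀ᶠ x in 𝓝[<] c, 0 < q x := by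
    filter_upwards [hcmp.filter_mono nhdsWithin_le_nhds, self_mem_nhdsWithin] with x hx hxc
    have hxc' : x - c < 0 := sub_neg.2 hxc
    have : 0 < k' * (x - c) ^ 2 := mul_pos (hk.trans hkk') (sq_pos_of_neg hxc')
    exact neg_neg_iff_pos.1 (neg_of_mul_pos_left (this.trans_le hx) hxc'.le)
  obtain ⟨a, ha, hqa, hapos⟩ :=
    exists_last_zero (hq.continuousOn.mono Icc_subset_Ici_self) hbc hqb hleft
  have hqa' : ContDiffOn ℝ 1 q (Ici a) := hq.mono (Ici_subset_Ici.2 ha.1)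
  obtain ⟨s, hs, -⟩ := hv.exists_ne_zero
  have hR : 0 ≤ R := (hs.1.trans hs.2).le
  obtain ⟨M, haM, hcM, hbound⟩ :=
    exists_forall_isIncreasingNeumannSolution_le n hqa'.continuousOn ha.2 hR
  set h := IccExtend haM ((Icc a M).domRestrict q)
  have hhq : ∀ x ∈ Icc a M, h x = q x := fun x hx => IccExtend_of_mem haM _ hx
  obtain ⟨L, hL⟩ := (hqa'.mono Icc_subset_Ici_self).exists_lipschitzOnWith one_ne_zero
    (convex_Icc a M) isCompact_Icc
  have hh : LipschitzWith (L * 1) h := hL.to_restrict.comp (LipschitzWith.projIcc haM)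
  obtain ⟨u, hu, hu0⟩ := hv.exists_isIncreasingNeumannSolution hk hkk' hh ha.2
    (fun x hx => (IccExtend_of_le_left haM _ hx).trans hqa)
    (fun x hx => (hhq x ⟨hx.1.le, (hx.2.trans hcM).le⟩).symm ▸ hapos x hx)
    ((hhq c ⟨ha.2.le, hcM.le⟩).trans hqc) (by
      filter_upwards [hcmp, Icc_mem_nhds ha.2 hcM] with x hx hxI using (hhq x hxI).symm ▸ hx)
  refine ⟨h, u, hh.continuous, hu, fun r hr => ?_⟩
  have hur : a < u r := hu0.1.trans_le (hu.monotoneOn_s2 ⟨le_rfl, hR⟩ hr hr.1)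
  exact ⟨ha.1.trans_lt hur, hhq _ ⟨hur.le,
    (hu.monotoneOn_s2 hr ⟨hR, le_rfl⟩ hr.2).trans (hbound u hu hu0.2)⟩⟩

end Truncation

section Ball

lemma IsRadialEigenvalue.exists_isRadialNeumannEigenfunction {n : ℕ} {lam : ℝ}
    (hlam : IsRadialEigenvalue (n + 1) lam) (hne : lam ≠ 1) :
    ∃ v, IsRadialNeumannEigenfunction n (lam - 1) 1 v := by
  obtain ⟨v, v', v'', hv, hv', hv'', hv'0, hv'1, ⟨s, hs, hvs⟩, heq⟩ := hlam
  have hvc : ContinuousOn v (Icc 0 1) := fun r hr => (hv r hr).continuousWithinAt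
  set w := IccExtend zero_le_one ((Icc (0 : ℝ) 1).domRestrict v)
  have hwv : EqOn w v (Icc 0 1) := fun r hr => IccExtend_of_mem _ _ hr
  have hw : Continuous w := hvc.domRestrict.Icc_extend'
  have hv'_eq : ∀ r ∈ Icc (0 : ℝ) 1, v' r = -((lam - 1) * (r * radialMean n w r)) := by
    intro r hr
    have hsource : ∀ r ∈ Ioo (0 : ℝ) 1,
        HasDerivAt v' (-(lam - 1) * w r - n / r * v' r) r := fun r hr => by
      refine (hv'' r hr).congr_deriv ?_
      have hode := heq r hr
      rw [hwv (Ioo_subset_Icc_self hr)]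
      push_cast at hode
      linear_combination -hode
    rw [eq_mul_radialMean (hw.const_mul _) hv' hv'0 hsource hr, radialMean_const_mul]
    ring
  refine ⟨w, hw, fun r hr => ?_, ?_, ?_⟩
  · have hnhds := Icc_mem_nhds hr.1 hr.2
    have hr' := Ioo_subset_Icc_self hr
    rw [← hv'_eq r hr']
    exact ((hv r hr').hasDerivAt hnhds).congr_of_eventuallyEq (hwv.eventuallyEq_of_mem hnhds)
  · have hmean := hv'_eq 1 ⟨zero_le_one, le_rfl⟩
    simpa [hv'1, sub_eq_zero, hne] using hmean
  · by_contra! hzero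
    refine hvs ((hwv hs).symm.trans ?_)
    exact EqOn.of_subset_closure (g := fun _ => 0) hzero hw.continuousOn continuousOn_const
      Ioo_subset_Icc_self (closure_Ioo zero_ne_one).ge hs

theorem stmt_2_general (N : ℕ) (hN : 1 ≤ N) (f : ℝ → ℝ)
    (hf_diff : ContDiffOn ℝ 1 f (Ici 0)) (hf0 : 0 ≤ f 0)
    (lam : ℝ) (hlam_gt : 1 < lam) (hlam_eig : IsRadialEigenvalue N lam)
    (u0 : ℝ) (hu0 : 0 < u0) (hfu0 : f u0 = u0)
    (hf'u0 : lam < derivWithin f (Ici 0) u0) :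
    ∃ u u' u'' : ℝ → ℝ,
      (∀ r ∈ Icc (0 : ℝ) 1, HasDerivWithinAt u (u' r) (Icc 0 1) r) ∧
      ContinuousOn u' (Icc 0 1) ∧
      (∀ r ∈ Ioo (0 : ℝ) 1, HasDerivAt u' (u'' r) r) ∧
      u' 0 = 0 ∧ u' 1 = 0 ∧
      (∀ r ∈ Icc (0 : ℝ) 1, 0 < u r) ∧
      MonotoneOn u (Icc 0 1) ∧
      (∃ r ∈ Icc (0 : ℝ) 1, ∃ s ∈ Icc (0 : ℝ) 1, u r ≠ u s) ∧
      (∀ r ∈ Ioo (0 : ℝ) 1,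
        -u'' r - ((N : ℝ) - 1) / r * u' r + u r = f (u r)) := by
  obtain ⟨n, rfl⟩ := Nat.exists_eq_add_of_le' hN
  obtain ⟨v, hv⟩ := hlam_eig.exists_isRadialNeumannEigenfunction hlam_gt.ne'
  have hderiv : HasDerivAt (fun s => s - f s) (1 - derivWithin f (Ici 0) u0) u0 := by
    have hfdiff := (hf_diff.differentiableOn one_ne_zero u0 hu0.le).hasDerivWithinAt
    exact (hasDerivAt_id u0).sub (hfdiff.hasDerivAt (Ici_mem_nhds hu0))
  obtain ⟨h, u, hh, hu, hhu⟩ := hv.exists_isIncreasingNeumannSolution_of_contDiffOn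
    (q := fun s => s - f s) (sub_pos.2 hlam_gt) (contDiffOn_id.sub hf_diff) hu0 (by simpa using hf0)
    (by simp [hfu0]) hderiv (by linarith)
  have hhuc : Continuous (h ∘ u) := hh.comp hu.isRadialSolution.continuous
  refine ⟨u, fun r => r * radialMean n (h ∘ u) r,
    fun r => h (u r) - n / r * (r * radialMean n (h ∘ u) r),
    fun r _ => (hu.isRadialSolution r).hasDerivWithinAt,
    (continuous_id.mul (hu.isRadialSolution.continuous_radialMean hh)).continuousOn,
    fun r hr => hasDerivAt_mul_radialMean hhuc hr.1.ne', zero_mul _, ?_,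
    fun r hr => (hhu r hr).1, hu.monotoneOn_s2, ⟨0, by simp, 1, by simp, ?_⟩, fun r hr => ?_⟩
  · simp only [hu.radialMean_eq_zero, mul_zero]
  · exact (hu.strictMonoOn_s2 (by simp) (by simp) zero_lt_one).ne
  · simp only [(hhu r (Ioo_subset_Icc_self hr)).2]
    push_cast
    ring

end Ball

/-- Existence of a nonconstant nondecreasing positive radial solution of the Neumann
problem `-Δu + u = f(u)` in the unit ball, assuming (f1)-(f3) and the spectral
condition (f4): `f` has a fixed point `u₀ > 0` with `f'(u₀) > λ₂^{rad}`. -/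
theorem stmt_2 (N : ℕ) (hN : 2 ≤ N) (f : ℝ → ℝ)
    (hf_diff : ContDiffOn ℝ 1 f (Ici 0))
    (hf_mono : MonotoneOn f (Ici 0))
    (hf0 : f 0 = 0)
    (hf'0 : derivWithin f (Ici 0) 0 = 0)
    (hf_liminf : ((1 : ℝ) : EReal) <
      Filter.liminf (fun s : ℝ => ((f s / s : ℝ) : EReal)) Filter.atTop)
    (lam2 : ℝ) (hlam2_gt : 1 < lam2)
    (hlam2_eig : IsRadialEigenvalue N lam2)
    (hlam2_min : ∀ lam ∈ Ioo (1:ℝ) lam2, ¬ IsRadialEigenvalue N lam)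
    (u0 : ℝ) (hu0 : 0 < u0) (hfu0 : f u0 = u0)
    (hf'u0 : lam2 < derivWithin f (Ici 0) u0) :
    ∃ u u' u'' : ℝ → ℝ,
      (∀ r ∈ Icc (0:ℝ) 1, HasDerivWithinAt u (u' r) (Icc 0 1) r) ∧
      ContinuousOn u' (Icc 0 1) ∧
      (∀ r ∈ Ioo (0:ℝ) 1, HasDerivAt u' (u'' r) r) ∧
      u' 0 = 0 ∧ u' 1 = 0 ∧
      (∀ r ∈ Icc (0:ℝ) 1, 0 < u r) ∧
      MonotoneOn u (Icc 0 1) ∧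
      (∃ r ∈ Icc (0:ℝ) 1, ∃ s ∈ Icc (0:ℝ) 1, u r ≠ u s) ∧
      (∀ r ∈ Ioo (0:ℝ) 1,
        -u'' r - ((N : ℝ) - 1) / r * u' r + u r = f (u r)) :=
  stmt_2_general N (one_le_two.trans hN) f hf_diff hf0.ge lam2 hlam2_gt hlam2_eig u0 hu0 hfu0 hf'u0
end
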